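/- For every nonempty bounded open set A ⊂ ℝ^d, the limiting derivative martingale measure does not possess a moment of order 1: E[M'(A)] = +∞, where M'(A) is the almost sure limit as t → ∞ of M'_t(A) = ∫_A (√(2d)·t − X_t(x)) e^{√(2d)·X_t(x) − d·t} dx. -/

import Mathlib

open MeasureTheory ProbabilityTheory Filter

noncomputable section

section
open MeasureTheory ProbabilityTheory Filter

noncomputable section

open scoped ENNReal NNReal

/-- Corrected superharmonic function for the killed Gaussian random walk. -/
def Hf (b : ℝ) : ℝ := b + 6 * (Real.exp 4 - Real.exp (-b))

/-- One step of the killed Gaussian random walk. -/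
def Kop (φ : ℝ → ℝ≥0∞) (b : ℝ) : ℝ≥0∞ :=
  ∫⁻ ξ, (if 0 ≤ b + ξ then φ (b + ξ) else 0) ∂(gaussianReal 0 1)

lemma measurable_Kop {φ : ℝ → ℝ≥0∞} (hφ : Measurable φ) : Measurable (Kop φ) := by
  unfold Kop
  apply Measurable.lintegral_prod_right' (f := fun p : ℝ × ℝ => if 0 ≤ p.1 + p.2 then φ (p.1 + p.2) else 0)
  apply Measurable.ite
  · exact measurableSet_le measurable_const (by fun_prop)
  · fun_prop
  · fun_prop

lemma Kop_mono {φ ψ : ℝ → ℝ≥0∞} (h : ∀ b, 0 ≤ b → φ b ≤ ψ b) (b : ℝ) : Kop φ b ≤ Kop ψ b := by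
  unfold Kop
  apply lintegral_mono
  intro ξ
  dsimp only
  split_ifs with h0
  · exact h _ h0
  · exact le_rfl

lemma gauss_tilt (c : ℝ) (g : ℝ → ℝ≥0∞) (hg : Measurable g) :
    ∫⁻ ξ, g (c - ξ) * ENNReal.ofReal (Real.exp (c * ξ - c ^ 2 / 2)) ∂(gaussianReal 0 1)
      = ∫⁻ ξ, g ξ ∂(gaussianReal 0 1) := by
  rw [gaussianReal_of_var_ne_zero _ one_ne_zero]
  rw [lintegral_withDensity_eq_lintegral_mul _ (measurable_gaussianPDF _ _) (by fun_prop),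
    lintegral_withDensity_eq_lintegral_mul _ (measurable_gaussianPDF _ _) hg]
  rw [← lintegral_sub_left_eq_self (fun x => (gaussianPDF 0 1 * g) x) c]
  apply lintegral_congr
  intro x
  simp only [Pi.mul_apply, gaussianPDF, gaussianPDFReal]
  rw [mul_comm (g _), ← mul_assoc, ← ENNReal.ofReal_mul (by positivity)]
  congr 2
  rw [mul_assoc, ← Real.exp_add]
  congr 2
  push_cast
  ring

lemma lint_ofReal_of_le {f g : ℝ → ℝ} {μ : Measure ℝ} (hg : Integrable g μ)
    (h0 : ∀ x, 0 ≤ g x) (h : ∀ x, f x ≤ g x) :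
    ∫⁻ x, ENNReal.ofReal (f x) ∂μ ≤ ENNReal.ofReal (∫ x, g x ∂μ) := by
  rw [ofReal_integral_eq_lintegral_ofReal hg (Eventually.of_forall h0)]
  exact lintegral_mono fun x => ENNReal.ofReal_le_ofReal (h x)

lemma int_exp_gauss (t : ℝ) :
    ∫ ξ, Real.exp (t * ξ) ∂(gaussianReal 0 1) = Real.exp (t ^ 2 / 2) := by
  have := congrFun (mgf_id_gaussianReal (μ := 0) (v := 1)) t
  simpa [mgf] using this

lemma integrable_id_gauss : Integrable (fun ξ : ℝ => ξ) (gaussianReal 0 1) := by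
  have := (memLp_id_gaussianReal (μ := 0) (v := 1) 1)
  exact (memLp_one_iff_integrable.1 this)

lemma Hf_nonneg {b : ℝ} (hb : 0 ≤ b) : 0 ≤ Hf b := by
  have h1 : Real.exp (-b) ≤ 1 := Real.exp_le_one_iff.2 (by linarith)
  have h2 : (1:ℝ) ≤ Real.exp 4 := Real.one_le_exp (by norm_num)
  unfold Hf; linarith

lemma le_Hf {b : ℝ} (hb : 0 ≤ b) : b ≤ Hf b := by
  have h1 : Real.exp (-b) ≤ 1 := Real.exp_le_one_iff.2 (by linarith)
  have h2 : (1:ℝ) ≤ Real.exp 4 := Real.one_le_exp (by norm_num)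
  unfold Hf; linarith

lemma measurable_Hf : Measurable Hf := by unfold Hf; fun_prop

lemma superharmonic {b : ℝ} (hb : 0 ≤ b) :
    Kop (fun b => ENNReal.ofReal (Hf b)) b + ENNReal.ofReal (Real.exp (-b))
      ≤ ENNReal.ofReal (Hf b) := by
  set g : ℝ → ℝ := fun ξ => b + ξ + 6 * Real.exp 4 - 5 * Real.exp (-b) * Real.exp ((-1) * ξ)
    + 6 * Real.exp (-4) * Real.exp (-b) * Real.exp ((-2) * ξ) with hgdef
  have i1 := integrable_exp_mul_gaussianReal (μ := 0) (v := 1) (-1)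
  have i2 := integrable_exp_mul_gaussianReal (μ := 0) (v := 1) (-2)
  have i0 := integrable_id_gauss
  have hbi : Integrable (fun ξ : ℝ => b + ξ) (gaussianReal 0 1) := (integrable_const b).add i0
  have hgi : Integrable g (gaussianReal 0 1) := by
    apply Integrable.add
    · apply Integrable.sub
      · exact hbi.add (integrable_const _)
      · exact i1.const_mul _
    · exact i2.const_mul _
  have hgv : ∫ ξ, g ξ ∂(gaussianReal 0 1) = b + 6 * Real.exp 4 - 5 * Real.exp (-b) * Real.exp (1/2)
      + 6 * Real.exp (-4) * Real.exp (-b) * Real.exp 2 := by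
    simp only [hgdef]
    rw [integral_add, integral_sub, integral_add, integral_add, integral_const_mul (5 * Real.exp (-b)),
      integral_const_mul (6 * Real.exp (-4) * Real.exp (-b)), int_exp_gauss, int_exp_gauss, integral_id_gaussianReal]
    · norm_num
    · exact integrable_const _
    · exact i0
    · exact hbi
    · exact integrable_const _
    · exact hbi.add (integrable_const _)
    · exact i1.const_mul _
    · exact (hbi.add (integrable_const _)).sub (i1.const_mul _)
    · exact i2.const_mul _
  have key : ∀ ξ, 0 ≤ g ξ ∧ (0 ≤ b + ξ → Hf (b + ξ) ≤ g ξ) := by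
    intro ξ
    set T := Real.exp (-(b + ξ)) with hT
    have e1 : Real.exp (-b) * Real.exp ((-1) * ξ) = T := by
      rw [hT, ← Real.exp_add]; congr 1; ring
    have e2 : Real.exp (-b) * Real.exp ((-2) * ξ) = Real.exp b * T ^ 2 := by
      rw [hT, ← Real.exp_nat_mul, ← Real.exp_add, ← Real.exp_add]; congr 1; push_cast; ring
    have e3 : g ξ = b + ξ + 6 * Real.exp 4 - 5 * T + 6 * Real.exp (-4) * (Real.exp b * T ^ 2) := by
      simp only [hgdef]; linear_combination (-5) * e1 + 6 * Real.exp (-4) * e2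
    have hTpos : 0 < T := Real.exp_pos _
    have hb1 : 1 ≤ Real.exp b := Real.one_le_exp hb
    have hTt : -(b + ξ) + 1 ≤ T := Real.add_one_le_exp _
    have h4 : Real.exp 4 * Real.exp (-4) = 1 := by rw [← Real.exp_add]; norm_num
    have hp4 := Real.exp_pos (-4)
    have hpp4 := Real.exp_pos 4
    have q1 : Real.exp (-4) * T ^ 2 ≤ Real.exp (-4) * (Real.exp b * T ^ 2) := by
      apply mul_le_mul_of_nonneg_left _ hp4.le
      nlinarith [sq_nonneg T]
    have q2 : 2 * T ≤ Real.exp 4 + Real.exp (-4) * T ^ 2 := by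
      have := mul_nonneg hp4.le (sq_nonneg (T - Real.exp 4))
      have e : Real.exp (-4) * (T - Real.exp 4) ^ 2
        = Real.exp (-4) * T ^ 2 - 2 * T * (Real.exp 4 * Real.exp (-4))
          + Real.exp 4 * (Real.exp 4 * Real.exp (-4)) := by ring
      rw [e, h4] at this
      linarith
    constructor
    · rw [e3]; linarith
    · intro _
      rw [e3]; unfold Hf
      have : 0 ≤ Real.exp (-4) * (Real.exp b * T ^ 2) := by positivity
      rw [← hT]
      linarith
  have hK : Kop (fun b => ENNReal.ofReal (Hf b)) b ≤ ENNReal.ofReal (∫ ξ, g ξ ∂(gaussianReal 0 1)) := by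
    have : Kop (fun b => ENNReal.ofReal (Hf b)) b
      = ∫⁻ ξ, ENNReal.ofReal (if 0 ≤ b + ξ then Hf (b + ξ) else 0) ∂(gaussianReal 0 1) := by
      unfold Kop
      apply lintegral_congr
      intro ξ
      split_ifs <;> simp
    rw [this]
    apply lint_ofReal_of_le hgi (fun x => (key x).1)
    intro ξ
    split_ifs with h
    · exact (key ξ).2 h
    · exact (key ξ).1
  refine (add_le_add_left hK _).trans ?_
  rw [← ENNReal.ofReal_add (integral_nonneg fun x => (key x).1) (Real.exp_pos _).le, hgv]
  apply ENNReal.ofReal_le_ofReal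
  unfold Hf
  have a1 : (8/5 : ℝ) ≤ Real.exp (1/2) := by
    have := Real.exp_one_gt_d9
    have h2 : Real.exp 1 = Real.exp (1/2) * Real.exp (1/2) := by rw [← Real.exp_add]; norm_num
    have := Real.exp_pos (1/2)
    nlinarith
  have a2 : Real.exp (-4) * Real.exp 2 ≤ 1 / 6 := by
    rw [← Real.exp_add]
    have : (-4 + 2 : ℝ) = -2 := by norm_num
    rw [this]
    have := Real.exp_one_gt_d9
    have h2 : Real.exp 2 = Real.exp 1 * Real.exp 1 := by rw [← Real.exp_add]; norm_num
    rw [Real.exp_neg, h2]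
    rw [inv_le_comm₀ (by positivity) (by norm_num)]
    nlinarith
  have a3 := Real.exp_pos (-b)
  nlinarith

lemma Kop_id_ge {b : ℝ} : ENNReal.ofReal b ≤ Kop (fun b => ENNReal.ofReal b) b := by
  have i0 := integrable_id_gauss
  have hbi : Integrable (fun ξ : ℝ => b + ξ) (gaussianReal 0 1) := (integrable_const b).add i0
  have e : Kop (fun b => ENNReal.ofReal b) b
      = ∫⁻ ξ, ENNReal.ofReal (b + ξ) ∂(gaussianReal 0 1) := by
    unfold Kop
    apply lintegral_congr
    intro ξ
    split_ifs with h
    · rfl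
    · rw [ENNReal.ofReal_of_nonpos (by linarith)]
  have hI : ∫ ξ, (b + ξ) ∂(gaussianReal 0 1) = b := by
    rw [integral_add (integrable_const _) i0, integral_id_gaussianReal]; simp
  rw [e]
  calc ENNReal.ofReal b = ENNReal.ofReal (∫ ξ, (b + ξ) ∂(gaussianReal 0 1)) := by rw [hI]
    _ ≤ ENNReal.ofReal (∫ ξ, max (b + ξ) 0 ∂(gaussianReal 0 1)) := by
        apply ENNReal.ofReal_le_ofReal
        apply integral_mono hbi hbi.pos_part
        intro x; exact le_max_left _ _
    _ = ∫⁻ ξ, ENNReal.ofReal (max (b + ξ) 0) ∂(gaussianReal 0 1) :=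
        ofReal_integral_eq_lintegral_ofReal hbi.pos_part
          (Eventually.of_forall fun x => le_max_right _ _)
    _ = _ := by
        apply lintegral_congr; intro x
        rcases le_total 0 (b + x) with h | h
        · rw [max_eq_left h]
        · rw [max_eq_right h, ENNReal.ofReal_of_nonpos h]; simp

/-- Comparison used for the second moment. -/
lemma Hf_sq_bound : ∃ C : ℝ, 0 < C ∧ ∀ c b : ℝ, 7/5 ≤ c → 0 ≤ b →
    Hf b ^ 2 * Real.exp (-(c * b)) ≤ C * Real.exp (-b) := by
  refine ⟨(5 + 6 * Real.exp 4) ^ 2, by positivity, fun c b hc hb => ?_⟩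
  have h1 : Hf b ≤ (5 + 6 * Real.exp 4) * Real.exp (b / 5) := by
    have := Real.add_one_le_exp (b / 5)
    have h2 := Real.one_le_exp (show 0 ≤ b / 5 by positivity)
    have h3 := Real.exp_pos (-b)
    have h4 := Real.exp_pos 4
    unfold Hf
    nlinarith
  have h2 : Hf b ^ 2 ≤ ((5 + 6 * Real.exp 4) * Real.exp (b / 5)) ^ 2 :=
    pow_le_pow_left₀ (Hf_nonneg hb) h1 2
  calc Hf b ^ 2 * Real.exp (-(c * b)) ≤ ((5 + 6 * Real.exp 4) * Real.exp (b / 5)) ^ 2 * Real.exp (-(7/5 * b)) := by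
        gcongr
    _ = _ := by
        rw [mul_pow, ← Real.exp_nat_mul, mul_assoc, ← Real.exp_add]; congr 2; push_cast; ring

end

section
open MeasureTheory ProbabilityTheory Filter

noncomputable section

open scoped ENNReal NNReal

/-- Distance to the barrier at time `n`. -/
def bP (c β : ℝ) (n : ℕ) (p : ℕ → ℝ) : ℝ := β + c * n - p n

/-- Exponential weight of a path that has not crossed the barrier. -/
def aP (c β : ℝ) (n : ℕ) (p : ℕ → ℝ) : ℝ≥0∞ :=
  open Classical in
  if ∀ j ≤ n, 0 ≤ bP c β j p then ENNReal.ofReal (Real.exp (c * p n - c ^ 2 / 2 * n)) else 0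

/-- The truncated path. -/
def trP (n : ℕ) (p : ℕ → ℝ) : ℕ → ℝ := fun j => p (min j n)

lemma bP_tr (c β : ℝ) (n : ℕ) (p : ℕ → ℝ) : bP c β n (trP n p) = bP c β n p := by
  simp [bP, trP]

lemma aP_tr (c β : ℝ) (n : ℕ) (p : ℕ → ℝ) : aP c β n (trP n p) = aP c β n p := by
  unfold aP
  have : (∀ j ≤ n, 0 ≤ bP c β j (trP n p)) ↔ (∀ j ≤ n, 0 ≤ bP c β j p) := by
    apply forall₂_congr
    intro j hj
    simp [bP, trP, min_eq_left hj]
  simp only [this]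
  simp [trP]

lemma measurable_bP (c β : ℝ) (n : ℕ) : Measurable (bP c β n) := by
  unfold bP; fun_prop

lemma measurable_aP (c β : ℝ) (n : ℕ) : Measurable (aP c β n) := by
  classical
  unfold aP
  apply Measurable.ite
  · have : {p : ℕ → ℝ | ∀ j ≤ n, 0 ≤ bP c β j p} = ⋂ j, ⋂ (_ : j ≤ n), {p | 0 ≤ bP c β j p} := by
      ext p; simp
    rw [this]
    exact MeasurableSet.iInter fun j => MeasurableSet.iInter fun _ =>
      measurableSet_le measurable_const (measurable_bP c β j)
  · fun_prop
  · fun_prop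

lemma aP_ne_top (c β : ℝ) (n : ℕ) (p : ℕ → ℝ) : aP c β n p ≠ ⊤ := by
  unfold aP; split_ifs <;> simp

lemma aP_mul_mono {c β : ℝ} {n : ℕ} {p : ℕ → ℝ} {s t : ℝ≥0∞} (h : 0 ≤ bP c β n p → s ≤ t) :
    aP c β n p * s ≤ aP c β n p * t := by
  unfold aP
  split_ifs with h0
  · exact mul_le_mul_right (h (h0 n le_rfl)) _
  · simp

/-- Kernel of one step. -/
def stepF (c : ℝ) (φ : ℝ → ℝ≥0∞) (b ξ : ℝ) : ℝ≥0∞ :=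
  (if 0 ≤ b + (c - ξ) then φ (b + (c - ξ)) else 0) * ENNReal.ofReal (Real.exp (c * ξ - c ^ 2 / 2))

lemma measurable_stepF (c : ℝ) {φ : ℝ → ℝ≥0∞} (hφ : Measurable φ) :
    Measurable (fun q : ℝ × ℝ => stepF c φ q.1 q.2) := by
  unfold stepF
  apply Measurable.mul
  · apply Measurable.ite
    · exact measurableSet_le measurable_const (by fun_prop)
    · fun_prop
    · fun_prop
  · fun_prop

lemma lint_stepF (c : ℝ) {φ : ℝ → ℝ≥0∞} (hφ : Measurable φ) (b : ℝ) :
    ∫⁻ ξ, stepF c φ b ξ ∂(gaussianReal 0 1) = Kop φ b := by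
  unfold stepF Kop
  refine gauss_tilt c (fun ξ => if 0 ≤ b + ξ then φ (b + ξ) else 0) ?_
  apply Measurable.ite
  · exact measurableSet_le measurable_const (by fun_prop)
  · fun_prop
  · fun_prop

lemma aP_step (c β : ℝ) (φ : ℝ → ℝ≥0∞) (n : ℕ) (p : ℕ → ℝ) :
    aP c β (n + 1) p * φ (bP c β (n + 1) p)
      = aP c β n p * stepF c φ (bP c β n p) (p (n + 1) - p n) := by
  have hb : bP c β (n + 1) p = bP c β n p + (c - (p (n + 1) - p n)) := by
    simp only [bP]; push_cast; ring
  unfold stepF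
  rw [← hb]
  by_cases h : ∀ j ≤ n, 0 ≤ bP c β j p
  · by_cases h1 : 0 ≤ bP c β (n + 1) p
    · have h2 : ∀ j ≤ n + 1, 0 ≤ bP c β j p := by
        intro j hj
        rcases Nat.le_succ_iff.1 hj with h' | h'
        · exact h j h'
        · rw [h']; exact h1
      unfold aP
      rw [if_pos h, if_pos h2, if_pos h1, mul_comm (φ _), ← mul_assoc, ← ENNReal.ofReal_mul (Real.exp_pos _).le,
        ← Real.exp_add]
      congr 3
      push_cast; ring
    · unfold aP
      have h2 : ¬ ∀ j ≤ n + 1, 0 ≤ bP c β j p := fun h' => h1 (h' _ le_rfl)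
      rw [if_neg h2, if_neg h1]; simp
  · unfold aP
    have h2 : ¬ ∀ j ≤ n + 1, 0 ≤ bP c β j p := fun h' => h fun j hj => h' j (by omega)
    rw [if_neg h2, if_neg h]; simp

lemma lint_indep {Ω α γ : Type*} [MeasurableSpace Ω] [MeasurableSpace α] [MeasurableSpace γ]
    {P : Measure Ω} [IsProbabilityMeasure P] {ξ : Ω → α} {W : Ω → γ}
    (hξ : Measurable ξ) (hW : Measurable W) (h : IndepFun ξ W P)
    {f : α → γ → ℝ≥0∞} (hf : Measurable (Function.uncurry f)) :
    ∫⁻ ω, f (ξ ω) (W ω) ∂P = ∫⁻ ω, ∫⁻ a, f a (W ω) ∂(P.map ξ) ∂P := by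
  have h1 := (indepFun_iff_map_prod_eq_prod_map_map hξ.aemeasurable hW.aemeasurable).1 h
  have : IsProbabilityMeasure (P.map ξ) := Measure.isProbabilityMeasure_map hξ.aemeasurable
  have : IsProbabilityMeasure (P.map W) := Measure.isProbabilityMeasure_map hW.aemeasurable
  calc ∫⁻ ω, f (ξ ω) (W ω) ∂P = ∫⁻ q, Function.uncurry f q ∂(P.map (fun ω => (ξ ω, W ω))) := by
        rw [lintegral_map hf (hξ.prodMk hW)]; rfl
    _ = ∫⁻ b, ∫⁻ a, f a b ∂(P.map ξ) ∂(P.map W) := by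
        rw [h1, lintegral_prod_symm _ hf.aemeasurable]; rfl
    _ = _ := by
        rw [lintegral_map (hf.lintegral_prod_left) hW]

section
variable {Ω : Type*} [MeasurableSpace Ω] {P : Measure Ω} [IsProbabilityMeasure P]

/-- Path of a process. -/
abbrev pth (U : ℕ → Ω → ℝ) (ω : Ω) : ℕ → ℝ := fun j => U j ω

lemma step_one (c β : ℝ) {U : ℕ → Ω → ℝ} (hU : ∀ n, Measurable (U n)) (n : ℕ)
    (hlaw : P.map (fun ω => U (n + 1) ω - U n ω) = gaussianReal 0 1)
    (hI : IndepFun (fun ω => U (n + 1) ω - U n ω) (fun ω => trP n (pth U ω)) P)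
    {φ : ℝ → ℝ≥0∞} (hφ : Measurable φ) :
    ∫⁻ ω, aP c β (n + 1) (pth U ω) * φ (bP c β (n + 1) (pth U ω)) ∂P
      = ∫⁻ ω, aP c β n (pth U ω) * Kop φ (bP c β n (pth U ω)) ∂P := by
  have hW : Measurable (fun ω => trP n (pth U ω)) := by
    apply measurable_pi_lambda; intro j; exact hU _
  have hm := (measurable_stepF c hφ)
  have ha := measurable_aP c β n
  have hb := measurable_bP c β n
  have key := lint_indep (P := P) ((hU (n + 1)).sub (hU n)) hW hI
    (f := fun ξ p => aP c β n p * stepF c φ (bP c β n p) ξ)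
    (by
      apply Measurable.mul
      · exact ha.comp measurable_snd
      · exact hm.comp ((hb.comp measurable_snd).prodMk measurable_fst))
  simp only [aP_tr, bP_tr, Pi.sub_apply] at key
  simp only [aP_step]
  refine key.trans ?_
  apply lintegral_congr
  intro ω
  have : Measurable (fun ξ => stepF c φ (bP c β n (pth U ω)) ξ) :=
    hm.comp (measurable_const.prodMk measurable_id)
  rw [lintegral_const_mul _ this]
  congr 1
  rw [← lint_stepF c hφ, ← hlaw]
  rfl

lemma step_two (c β : ℝ) {U V : ℕ → Ω → ℝ} (hU : ∀ n, Measurable (U n)) (hV : ∀ n, Measurable (V n))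
    (n : ℕ)
    (hlawU : P.map (fun ω => U (n + 1) ω - U n ω) = gaussianReal 0 1)
    (hlawV : P.map (fun ω => V (n + 1) ω - V n ω) = gaussianReal 0 1)
    (hUV : IndepFun (fun ω => U (n + 1) ω - U n ω) (fun ω => V (n + 1) ω - V n ω) P)
    (hI : IndepFun (fun ω => (U (n + 1) ω - U n ω, V (n + 1) ω - V n ω))
      (fun ω => (trP n (pth U ω), trP n (pth V ω))) P)
    {φ : ℝ → ℝ≥0∞} (hφ : Measurable φ) :
    ∫⁻ ω, (aP c β (n + 1) (pth U ω) * φ (bP c β (n + 1) (pth U ω)))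
        * (aP c β (n + 1) (pth V ω) * φ (bP c β (n + 1) (pth V ω))) ∂P
      = ∫⁻ ω, (aP c β n (pth U ω) * Kop φ (bP c β n (pth U ω)))
        * (aP c β n (pth V ω) * Kop φ (bP c β n (pth V ω))) ∂P := by
  have hWU : Measurable (fun ω => trP n (pth U ω)) := by
    apply measurable_pi_lambda; intro j; exact hU _
  have hWV : Measurable (fun ω => trP n (pth V ω)) := by
    apply measurable_pi_lambda; intro j; exact hV _
  have hξU : Measurable (fun ω => U (n + 1) ω - U n ω) := (hU (n + 1)).sub (hU n)
  have hξV : Measurable (fun ω => V (n + 1) ω - V n ω) := (hV (n + 1)).sub (hV n)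
  have hm := (measurable_stepF c hφ)
  have ha := measurable_aP c β n
  have hb := measurable_bP c β n
  have key := lint_indep (P := P) (hξU.prodMk hξV) (hWU.prodMk hWV) hI
    (f := fun ξ p => (aP c β n p.1 * stepF c φ (bP c β n p.1) ξ.1)
      * (aP c β n p.2 * stepF c φ (bP c β n p.2) ξ.2))
    (by
      apply Measurable.mul
      · apply Measurable.mul
        · exact ha.comp (measurable_fst.comp measurable_snd)
        · exact hm.comp ((hb.comp (measurable_fst.comp measurable_snd)).prodMk
            (measurable_fst.comp measurable_fst))
      · apply Measurable.mul
        · exact ha.comp (measurable_snd.comp measurable_snd)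
        · exact hm.comp ((hb.comp (measurable_snd.comp measurable_snd)).prodMk
            (measurable_snd.comp measurable_fst)))
  simp only [aP_tr, bP_tr] at key
  simp only [aP_step]
  refine key.trans ?_
  apply lintegral_congr
  intro ω
  rw [(indepFun_iff_map_prod_eq_prod_map_map hξU.aemeasurable hξV.aemeasurable).1 hUV, hlawU, hlawV]
  have h1 : Measurable (fun ξ => stepF c φ (bP c β n (pth U ω)) ξ) :=
    hm.comp (measurable_const.prodMk measurable_id)
  have h2 : Measurable (fun ξ => stepF c φ (bP c β n (pth V ω)) ξ) :=
    hm.comp (measurable_const.prodMk measurable_id)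
  rw [lintegral_prod_mul (f := fun ξ => aP c β n (pth U ω) * stepF c φ (bP c β n (pth U ω)) ξ)
    (g := fun ξ => aP c β n (pth V ω) * stepF c φ (bP c β n (pth V ω)) ξ)
    (h1.const_mul _).aemeasurable (h2.const_mul _).aemeasurable,
    lintegral_const_mul _ h1, lintegral_const_mul _ h2, lint_stepF c hφ, lint_stepF c hφ]

end

lemma measurable_Kop_iter {φ : ℝ → ℝ≥0∞} (hφ : Measurable φ) (n : ℕ) : Measurable (Kop^[n] φ) := by
  induction n with
  | zero => simpa
  | succ n ih => rw [Function.iterate_succ_apply']; exact measurable_Kop ih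

section
variable {Ω : Type*} [MeasurableSpace Ω] {P : Measure Ω} [IsProbabilityMeasure P]

lemma lint_iter (c : ℝ) {β : ℝ} (hβ : 0 ≤ β) {U : ℕ → Ω → ℝ} (hU : ∀ n, Measurable (U n))
    (h0 : U 0 =ᵐ[P] 0)
    (hlaw : ∀ n, P.map (fun ω => U (n + 1) ω - U n ω) = gaussianReal 0 1)
    (hI : ∀ n, IndepFun (fun ω => U (n + 1) ω - U n ω) (fun ω => trP n (pth U ω)) P) (n : ℕ) :
    ∀ {φ : ℝ → ℝ≥0∞}, Measurable φ →
    ∫⁻ ω, aP c β n (pth U ω) * φ (bP c β n (pth U ω)) ∂P = Kop^[n] φ β := by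
  induction n with
  | zero =>
    intro φ hφ
    have : ∀ᵐ ω ∂P, aP c β 0 (pth U ω) * φ (bP c β 0 (pth U ω)) = φ β := by
      filter_upwards [h0] with ω hω
      have hb : bP c β 0 (pth U ω) = β := by simp [bP, pth, hω]
      have ha : aP c β 0 (pth U ω) = 1 := by
        unfold aP
        rw [if_pos]
        · simp [pth, hω]
        · intro j hj
          obtain rfl : j = 0 := by omega
          rw [hb]; exact hβ
      rw [ha, hb, one_mul]
    rw [lintegral_congr_ae this]
    simp
  | succ n ih =>
    intro φ hφ
    rw [step_one c β hU n (hlaw n) (hI n) hφ, ih (measurable_Kop hφ), Function.iterate_succ_apply]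

end

/-- The Green sum. -/
lemma green_sum {β : ℝ} (hβ : 0 ≤ β) (n : ℕ) :
    ∑ s ∈ Finset.range n, Kop^[s] (fun b => ENNReal.ofReal (Real.exp (-b))) β
      ≤ ENNReal.ofReal (Hf β) := by
  set g : ℝ → ℝ≥0∞ := fun b => ENNReal.ofReal (Real.exp (-b)) with hg
  have hgm : Measurable g := by rw [hg]; fun_prop
  have Kadd : ∀ φ ψ : ℝ → ℝ≥0∞, Measurable φ → ∀ b, Kop (fun x => φ x + ψ x) b = Kop φ b + Kop ψ b := by
    intro φ ψ hφ b
    unfold Kop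
    rw [← lintegral_add_left]
    · apply lintegral_congr; intro ξ; split_ifs <;> simp
    · apply Measurable.ite
      · exact measurableSet_le measurable_const (by fun_prop)
      · fun_prop
      · fun_prop
  have main : ∀ n : ℕ, ∀ b, 0 ≤ b →
      (∑ s ∈ Finset.range n, Kop^[s] g b) ≤ ENNReal.ofReal (Hf b) := by
    intro n
    induction n with
    | zero => simp
    | succ n ih =>
      intro b hb
      rw [Finset.sum_range_succ']
      have e : ∑ s ∈ Finset.range n, Kop^[s + 1] g b = Kop (fun x => ∑ s ∈ Finset.range n, Kop^[s] g x) b := by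
        have : ∀ t : Finset ℕ, ∑ s ∈ t, Kop^[s + 1] g b = Kop (fun x => ∑ s ∈ t, Kop^[s] g x) b := by
          intro t
          induction t using Finset.induction_on with
          | empty => simp [Kop]
          | insert a t ha iht =>
            simp only [Finset.sum_insert ha]
            rw [Kadd _ _ (measurable_Kop_iter hgm a), iht, Function.iterate_succ_apply']
        exact this _
      rw [e]
      refine (add_le_add_left (Kop_mono ih b) _).trans ?_
      exact superharmonic hb
  exact main n β hβ

lemma first_moment_iter (β : ℝ) (n : ℕ) :
    ENNReal.ofReal β ≤ Kop^[n] (fun b => ENNReal.ofReal b) β := by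
  have : ∀ n : ℕ, ∀ b, ENNReal.ofReal b ≤ Kop^[n] (fun b => ENNReal.ofReal b) b := by
    intro n
    induction n with
    | zero => simp
    | succ n ih =>
      intro b
      rw [Function.iterate_succ_apply']
      exact Kop_id_ge.trans (Kop_mono (fun b _ => ih b) b)
  exact this n β

end

section
open MeasureTheory ProbabilityTheory Filter

noncomputable section

open scoped ENNReal NNReal

/-- Euclidean space. -/
abbrev EE (d : ℕ) := EuclideanSpace ℝ (Fin d)

/-- The properties of the discrete-time field used in the proof. -/
structure DF {d : ℕ} {Ω : Type*} [MeasurableSpace Ω] (P : Measure Ω)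
    (Y : ℕ → EE d → Ω → ℝ) (R L : ℝ) : Prop where
  meas : ∀ n x, Measurable (Y n x)
  cont : ∀ n ω, Continuous (fun x => Y n x ω)
  zero : ∀ x, Y 0 x =ᵐ[P] 0
  law : ∀ (n : ℕ) x, P.map (Y n x) = gaussianReal 0 n
  incr : ∀ n x, P.map (fun ω => Y (n + 1) x ω - Y n x ω) = gaussianReal 0 1
  indep : ∀ n x y, IndepFun (fun ω => (Y (n + 1) x ω - Y n x ω, Y (n + 1) y ω - Y n y ω))
      (fun ω => (trP n (pth (fun j => Y j x) ω), trP n (pth (fun j => Y j y) ω))) P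
  dec : ∀ (n : ℕ) x y, R * Real.exp (-(n : ℝ)) ≤ ‖x - y‖ →
      IndepFun (fun ω => Y (n + 1) x ω - Y n x ω) (fun ω => Y (n + 1) y ω - Y n y ω) P
  loc : ∀ (n : ℕ) x y, 1 ≤ n → ‖x - y‖ ≤ Real.exp (-(n : ℝ)) →
      ∃ (a : ℝ) (v : ℝ≥0), 0 ≤ a ∧ a * n ≤ L ∧ v ≤ 2 * L ∧
        P.map (fun ω => Y n x ω - Y n y ω - a * Y n x ω) = gaussianReal 0 v ∧
        IndepFun (fun ω => Y n x ω - Y n y ω - a * Y n x ω) (Y n x) P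

section
set_option linter.unusedSectionVars false
variable {d : ℕ} {Ω : Type*} [MeasurableSpace Ω] {P : Measure Ω} [IsProbabilityMeasure P]
  {Y : ℕ → EE d → Ω → ℝ} {R L : ℝ}

lemma DF.indep1 (h : DF P Y R L) (n : ℕ) (x : EE d) :
    IndepFun (fun ω => Y (n + 1) x ω - Y n x ω) (fun ω => trP n (pth (fun j => Y j x) ω)) P :=
  (h.indep n x x).comp measurable_fst measurable_fst

lemma DF.joint (h : DF P Y R L) (n : ℕ) : Measurable (Function.uncurry (Y n)) :=
  measurable_uncurry_of_continuous_of_measurable (h.cont n) (h.meas n)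

/-- Truncated derivative density. -/
def zz (c β : ℝ) (Y : ℕ → EE d → Ω → ℝ) (n : ℕ) (x : EE d) (ω : Ω) : ℝ≥0∞ :=
  aP c β n (pth (fun j => Y j x) ω) * ENNReal.ofReal (bP c β n (pth (fun j => Y j x) ω))

lemma DF.meas_zz (h : DF P Y R L) (c β : ℝ) (n : ℕ) :
    Measurable (fun q : EE d × Ω => zz c β Y n q.1 q.2) := by
  have hp : Measurable (fun q : EE d × Ω => pth (fun j => Y j q.1) q.2) := by
    apply measurable_pi_lambda; intro j; exact h.joint j
  unfold zz
  apply Measurable.mul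
  · exact (measurable_aP c β n).comp hp
  · exact ((measurable_bP c β n).comp hp).ennreal_ofReal

lemma DF.first_moment (h : DF P Y R L) (c : ℝ) {β : ℝ} (hβ : 0 ≤ β) (n : ℕ) (x : EE d) :
    ENNReal.ofReal β ≤ ∫⁻ ω, zz c β Y n x ω ∂P := by
  unfold zz
  rw [lint_iter c hβ (fun n => h.meas n x) (h.zero x) (fun n => h.incr n x)
    (fun n => h.indep1 n x) n (φ := fun b => ENNReal.ofReal b) ENNReal.measurable_ofReal]
  exact first_moment_iter β n

lemma ennreal_mul_le_sq (a b : ℝ≥0∞) : a * b ≤ a * a + b * b := by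
  rcases le_total a b with h | h
  · exact (mul_le_mul_left h b).trans le_add_self
  · exact (mul_le_mul_right h a).trans le_self_add

lemma aP_sq_bound {c β C : ℝ} (hC : ∀ c b : ℝ, 7/5 ≤ c → 0 ≤ b →
    Hf b ^ 2 * Real.exp (-(c * b)) ≤ C * Real.exp (-b)) (hc : 7/5 ≤ c) (hC0 : 0 < C)
    (n : ℕ) (p : ℕ → ℝ) :
    (aP c β n p * ENNReal.ofReal (Hf (bP c β n p))) * (aP c β n p * ENNReal.ofReal (Hf (bP c β n p)))
      ≤ ENNReal.ofReal (C * Real.exp (c * β) * Real.exp (c ^ 2 / 2 * n)) *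
        (aP c β n p * ENNReal.ofReal (Real.exp (-(bP c β n p)))) := by
  have : (aP c β n p * ENNReal.ofReal (Hf (bP c β n p))) * (aP c β n p * ENNReal.ofReal (Hf (bP c β n p)))
    = aP c β n p * (aP c β n p * ENNReal.ofReal (Hf (bP c β n p)) * ENNReal.ofReal (Hf (bP c β n p))) := by
    ring
  rw [this, mul_left_comm (ENNReal.ofReal (C * Real.exp (c * β) * Real.exp (c ^ 2 / 2 * n)))]
  apply aP_mul_mono
  intro hb
  set b := bP c β n p with hbdef
  unfold aP
  split_ifs
  · rw [← ENNReal.ofReal_mul (Real.exp_pos _).le, ← ENNReal.ofReal_mul (mul_nonneg (Real.exp_pos _).le (Hf_nonneg hb)),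
      ← ENNReal.ofReal_mul (by positivity)]
    apply ENNReal.ofReal_le_ofReal
    have e : c * p n - c ^ 2 / 2 * n = c * β + c ^ 2 / 2 * n + -(c * b) := by
      rw [hbdef]; unfold bP; ring
    rw [e, Real.exp_add, Real.exp_add]
    have := mul_le_mul_of_nonneg_left (hC c b hc hb)
      (mul_nonneg (Real.exp_pos (c * β)).le (Real.exp_pos (c ^ 2 / 2 * n)).le)
    nlinarith
  · simp

lemma DF.pair (h : DF P Y R L) (hR : 0 ≤ R) {c C β : ℝ} (hβ : 0 ≤ β)
    (hC : ∀ c b : ℝ, 7/5 ≤ c → 0 ≤ b →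
      Hf b ^ 2 * Real.exp (-(c * b)) ≤ C * Real.exp (-b)) (hc : 7/5 ≤ c) (hC0 : 0 < C)
    (x y : EE d) {s n : ℕ} (hsn : s ≤ n) (hs : s < n → R * Real.exp (-(s:ℝ)) ≤ ‖x - y‖) :
    ∫⁻ ω, zz c β Y n x ω * zz c β Y n y ω ∂P ≤
      ENNReal.ofReal (2 * C * Real.exp (c * β) * Real.exp (c ^ 2 / 2 * s)) *
        Kop^[s] (fun b => ENNReal.ofReal (Real.exp (-b))) β := by
  set H : ℝ → ℝ≥0∞ := fun b => ENNReal.ofReal (Hf b) with hH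
  have hHm : Measurable H := by rw [hH]; exact measurable_Hf.ennreal_ofReal
  have h1 : ∀ x ω, zz c β Y n x ω ≤ aP c β n (pth (fun j => Y j x) ω) * H (bP c β n (pth (fun j => Y j x) ω)) := by
    intro x ω
    unfold zz
    apply aP_mul_mono
    intro hb
    exact ENNReal.ofReal_le_ofReal (le_Hf hb)
  have h2 : ∀ m, s ≤ m → (s < m → R * Real.exp (-(s:ℝ)) ≤ ‖x - y‖) →
    ∫⁻ ω, (aP c β m (pth (fun j => Y j x) ω) * H (bP c β m (pth (fun j => Y j x) ω))) *
      (aP c β m (pth (fun j => Y j y) ω) * H (bP c β m (pth (fun j => Y j y) ω))) ∂P ≤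
    ∫⁻ ω, (aP c β s (pth (fun j => Y j x) ω) * H (bP c β s (pth (fun j => Y j x) ω))) *
      (aP c β s (pth (fun j => Y j y) ω) * H (bP c β s (pth (fun j => Y j y) ω))) ∂P := by
    intro m hm
    induction m, hm using Nat.le_induction with
    | base => intro _; exact le_rfl
    | succ m hm ih =>
      intro hs'
      have hd := hs' (by omega)
      have hd' : R * Real.exp (-(m:ℝ)) ≤ ‖x - y‖ := by
        refine le_trans ?_ hd
        apply mul_le_mul_of_nonneg_left _ hR
        apply Real.exp_le_exp.2
        have : (s:ℝ) ≤ m := by exact_mod_cast hm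
        linarith
      rw [step_two c β (fun n => h.meas n x) (fun n => h.meas n y) m (h.incr m x) (h.incr m y)
        (h.dec m x y hd') (h.indep m x y) hHm]
      refine le_trans ?_ (ih fun _ => hd)
      apply lintegral_mono
      intro ω
      apply mul_le_mul' <;>
      · apply aP_mul_mono
        intro hb
        exact le_self_add.trans (superharmonic hb)
  have h3 : ∀ x, ∫⁻ ω, (aP c β s (pth (fun j => Y j x) ω) * H (bP c β s (pth (fun j => Y j x) ω))) *
      (aP c β s (pth (fun j => Y j x) ω) * H (bP c β s (pth (fun j => Y j x) ω))) ∂P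
      ≤ ENNReal.ofReal (C * Real.exp (c * β) * Real.exp (c ^ 2 / 2 * s)) *
        Kop^[s] (fun b => ENNReal.ofReal (Real.exp (-b))) β := by
    intro x
    refine (lintegral_mono fun ω => aP_sq_bound hC hc hC0 s _).trans ?_
    rw [lintegral_const_mul']
    · rw [lint_iter c hβ (fun n => h.meas n x) (h.zero x) (fun n => h.incr n x)
        (fun n => h.indep1 n x) s (φ := fun b => ENNReal.ofReal (Real.exp (-b))) (by fun_prop)]
    · exact ENNReal.ofReal_ne_top
  have hmz : ∀ x, Measurable fun ω => (aP c β s (pth (fun j => Y j x) ω) * H (bP c β s (pth (fun j => Y j x) ω))) := by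
    intro x
    have hp : Measurable (fun ω => pth (fun j => Y j x) ω) := by
      apply measurable_pi_lambda; intro j; exact h.meas j x
    exact ((measurable_aP c β s).comp hp).mul (hHm.comp ((measurable_bP c β s).comp hp))
  calc ∫⁻ ω, zz c β Y n x ω * zz c β Y n y ω ∂P ≤ _ :=
        lintegral_mono fun ω => mul_le_mul' (h1 x ω) (h1 y ω)
    _ ≤ _ := h2 n hsn hs
    _ ≤ _ := lintegral_mono fun ω => ennreal_mul_le_sq _ _
    _ = _ := lintegral_add_left ((hmz x).mul (hmz x)) _
    _ ≤ _ := add_le_add (h3 x) (h3 y)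
    _ = _ := by
      rw [← two_mul, ← mul_assoc]
      congr 1
      rw [show (2:ℝ≥0∞) = ENNReal.ofReal 2 by simp, ← ENNReal.ofReal_mul (by norm_num)]
      congr 1; ring

lemma DF.second_moment (h : DF P Y R L) (hR : 0 < R) {c β : ℝ} (hβ : 0 ≤ β)
    (hc : 7/5 ≤ c) (hcd : c ^ 2 = 2 * d)
    {A : Set (EE d)} (hA : MeasurableSet A) (hAf : volume A ≠ ⊤) (hAR : ∀ x ∈ A, ∀ y ∈ A, ‖x - y‖ ≤ R) :
    ∃ C : ℝ≥0∞, C ≠ ⊤ ∧ ∀ n, ∫⁻ ω, (∫⁻ x in A, zz c β Y n x ω) ^ 2 ∂P ≤ C := by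
  obtain ⟨C, hC0, hC⟩ := Hf_sq_bound
  set u : ℕ → ℝ≥0∞ := fun s => Kop^[s] (fun b => ENNReal.ofReal (Real.exp (-b))) β with hu
  set q : ℕ → ℝ≥0∞ := fun s => ENNReal.ofReal (2 * C * Real.exp (c * β) * Real.exp (c ^ 2 / 2 * s)) * u s with hq
  set V : ℝ≥0∞ := volume (Metric.closedBall (0 : EE d) 1) with hV
  have hVf : V ≠ ⊤ := measure_closedBall_lt_top.ne
  refine ⟨volume A * (ENNReal.ofReal (2 * C * Real.exp (c * β) * (R * Real.exp 1) ^ d) * V * ENNReal.ofReal (Hf β)), ?_, ?_⟩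
  · exact ENNReal.mul_ne_top hAf (ENNReal.mul_ne_top (ENNReal.mul_ne_top ENNReal.ofReal_ne_top hVf) ENNReal.ofReal_ne_top)
  intro n
  have hz := h.meas_zz c β n
  have hzx : ∀ ω, Measurable (fun x => zz c β Y n x ω) := fun ω => hz.comp (measurable_id.prodMk measurable_const)
  set μ : Measure (EE d) := volume.restrict A with hμ
  have hkey : ∀ x ∈ A, ∀ y ∈ A, ∫⁻ ω, zz c β Y n x ω * zz c β Y n y ω ∂P ≤
      ∑ s ∈ Finset.range (n + 1), q s * (Metric.closedBall x (R * Real.exp 1 * Real.exp (-(s:ℝ)))).indicator 1 y := by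
    intro x hx y hy
    classical
    have hex : ∃ s, s = n ∨ R * Real.exp (-(s:ℝ)) ≤ ‖x - y‖ := ⟨n, Or.inl rfl⟩
    set s := Nat.find hex with hs
    have hspec := Nat.find_spec hex
    have hsn : s ≤ n := Nat.find_min' hex (Or.inl rfl)
    have hle := h.pair hR.le hβ hC hc hC0 x y hsn (fun hlt => by
      rcases hspec with h' | h'
      · omega
      · exact h')
    have hmem : y ∈ Metric.closedBall x (R * Real.exp 1 * Real.exp (-(s:ℝ))) := by
      rw [Metric.mem_closedBall, dist_comm, dist_eq_norm]
      rcases Nat.eq_zero_or_pos s with h0 | h0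
      · rw [h0]
        refine (hAR x hx y hy).trans ?_
        have := Real.one_le_exp (show (0:ℝ) ≤ 1 by norm_num)
        simp
        nlinarith
      · have := Nat.find_min hex (m := s - 1) (by omega)
        push Not at this
        have h2 := this.2.le
        have e : Real.exp 1 * Real.exp (-(s:ℝ)) = Real.exp (-((s-1 : ℕ):ℝ)) := by
          rw [← Real.exp_add]; congr 1; push_cast [Nat.cast_sub h0]; ring
        rw [mul_assoc, e]; exact h2
    refine hle.trans ?_
    refine le_trans ?_ (Finset.single_le_sum (f := fun s : ℕ => q s * (Metric.closedBall x (R * Real.exp 1 * Real.exp (-(s:ℝ)))).indicator 1 y) (fun _ _ => zero_le) (Finset.mem_range.2 (Nat.lt_succ_of_le hsn)))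
    simp only [Set.indicator_of_mem hmem, Pi.one_apply, mul_one]
    exact le_rfl
  have hball : ∀ (x : EE d) (s : ℕ), volume (Metric.closedBall x (R * Real.exp 1 * Real.exp (-(s:ℝ)))) =
      ENNReal.ofReal ((R * Real.exp 1) ^ d * Real.exp (-(c ^ 2 / 2 * s))) * V := by
    intro x s
    rw [Measure.addHaar_closedBall' _ _ (by positivity), finrank_euclideanSpace, Fintype.card_fin, mul_pow,
      ← Real.exp_nat_mul, hcd]
    congr 4
    ring
  calc ∫⁻ ω, (∫⁻ x in A, zz c β Y n x ω) ^ 2 ∂P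
      = ∫⁻ ω, ∫⁻ x, ∫⁻ y, zz c β Y n x ω * zz c β Y n y ω ∂μ ∂μ ∂P := by
        apply lintegral_congr; intro ω
        rw [sq, ← lintegral_mul_const _ (hzx ω)]
        apply lintegral_congr; intro x
        rw [lintegral_const_mul _ (hzx ω)]
    _ = ∫⁻ x, ∫⁻ ω, ∫⁻ y, zz c β Y n x ω * zz c β Y n y ω ∂μ ∂P ∂μ := by
        rw [lintegral_lintegral_swap]
        apply Measurable.aemeasurable
        apply Measurable.lintegral_prod_right' (f := fun r : (Ω × EE d) × EE d => zz c β Y n r.1.2 r.1.1 * zz c β Y n r.2 r.1.1)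
        apply Measurable.mul
        · exact hz.comp (by fun_prop : Measurable (fun r : (Ω × EE d) × EE d => (r.1.2, r.1.1)))
        · exact hz.comp (by fun_prop : Measurable (fun r : (Ω × EE d) × EE d => (r.2, r.1.1)))
    _ = ∫⁻ x, ∫⁻ y, ∫⁻ ω, zz c β Y n x ω * zz c β Y n y ω ∂P ∂μ ∂μ := by
        apply lintegral_congr; intro x
        rw [lintegral_lintegral_swap]
        apply Measurable.aemeasurable
        apply Measurable.mul
        · exact hz.comp (by fun_prop : Measurable (fun r : Ω × EE d => (x, r.1)))
        · exact hz.comp (by fun_prop : Measurable (fun r : Ω × EE d => (r.2, r.1)))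
    _ ≤ ∫⁻ x, ∫⁻ y, ∑ s ∈ Finset.range (n + 1), q s * (Metric.closedBall x (R * Real.exp 1 * Real.exp (-(s:ℝ)))).indicator 1 y ∂μ ∂μ := by
        apply setLIntegral_mono_ae' hA
        refine Eventually.of_forall fun x hx => ?_
        apply setLIntegral_mono_ae' hA
        exact Eventually.of_forall fun y hy => hkey x hx y hy
    _ ≤ ∫⁻ x, (ENNReal.ofReal (2 * C * Real.exp (c * β) * (R * Real.exp 1) ^ d) * V * ENNReal.ofReal (Hf β)) ∂μ := by
        apply lintegral_mono; intro x
        dsimp only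
        rw [lintegral_finsetSum]
        · calc ∑ s ∈ Finset.range (n + 1), ∫⁻ y, q s * (Metric.closedBall x (R * Real.exp 1 * Real.exp (-(s:ℝ)))).indicator 1 y ∂μ
              ≤ ∑ s ∈ Finset.range (n + 1), ENNReal.ofReal (2 * C * Real.exp (c * β) * (R * Real.exp 1) ^ d) * V * u s := by
                apply Finset.sum_le_sum
                intro s _
                rw [lintegral_const_mul _ (measurable_one.indicator Metric.isClosed_closedBall.measurableSet),
                  lintegral_indicator_one Metric.isClosed_closedBall.measurableSet]
                refine (mul_le_mul_right (Measure.restrict_apply_le _ _) _).trans ?_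
                rw [hball, hq]
                dsimp only
                rw [mul_right_comm, ← mul_assoc (ENNReal.ofReal _), ← ENNReal.ofReal_mul (by positivity)]
                apply le_of_eq
                congr 3
                have : Real.exp (c ^ 2 / 2 * s) * Real.exp (-(c ^ 2 / 2 * s)) = 1 := by
                  rw [← Real.exp_add]; simp
                linear_combination (2 * C * Real.exp (c * β) * (R * Real.exp 1) ^ d) * this
            _ = ENNReal.ofReal (2 * C * Real.exp (c * β) * (R * Real.exp 1) ^ d) * V * ∑ s ∈ Finset.range (n + 1), u s := by
                rw [Finset.mul_sum]
            _ ≤ _ := mul_le_mul_right (green_sum hβ (n + 1)) _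
        · intro s _
          exact (measurable_one.indicator Metric.isClosed_closedBall.measurableSet).const_mul _
    _ = _ := by rw [lintegral_const, hμ, Measure.restrict_apply_univ, mul_comm]

end

end

section
open MeasureTheory ProbabilityTheory Filter

noncomputable section

open scoped ENNReal NNReal

/-- The weight carried by points close to (or beyond) the critical level. -/
def gw (c β : ℝ) (n : ℕ) (w : ℝ) : ℝ≥0∞ :=
  if c * n - w < β then ENNReal.ofReal (β + |c * n - w|) else 0

lemma measurable_gw (c β : ℝ) (n : ℕ) : Measurable (gw c β n) := by
  unfold gw
  apply Measurable.ite
  · exact measurableSet_lt (by fun_prop) measurable_const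
  · fun_prop
  · fun_prop

lemma lint_exp_abs : ∫⁻ u : ℝ, ENNReal.ofReal (Real.exp (-(|u| / 5))) ≠ ⊤ := by
  have h1 : Integrable (fun u : ℝ => Real.exp (-(|u| / 5))) := by
    have hpos : IntegrableOn (fun u : ℝ => Real.exp (-(|u| / 5))) (Set.Ioi 0) := by
      have := exp_neg_integrableOn_Ioi 0 (show (0:ℝ) < 1 / 5 by norm_num)
      refine this.congr_fun ?_ measurableSet_Ioi
      intro u hu
      simp only [Set.mem_Ioi] at hu
      dsimp only
      rw [abs_of_pos hu]; congr 1; ring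
    have hneg : IntegrableOn (fun u : ℝ => Real.exp (-(|u| / 5))) (Set.Iic 0) := by
      have := integrableOn_exp_mul_Iic (show (0:ℝ) < 1 / 5 by norm_num) 0
      refine this.congr_fun ?_ measurableSet_Iic
      intro u hu
      simp only [Set.mem_Iic] at hu
      dsimp only
      rw [abs_of_nonpos hu]; congr 1; ring
    have := hneg.union hpos
    rwa [Set.Iic_union_Ioi, integrableOn_univ] at this
  rw [← ofReal_integral_eq_lintegral_ofReal h1 (Eventually.of_forall fun u => (Real.exp_pos _).le)]
  exact ENNReal.ofReal_ne_top

lemma gw_bound {c β L : ℝ} (hc : 7/5 ≤ c) (hβ : 0 ≤ β) (hL : 0 ≤ L) :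
    ∃ C : ℝ≥0∞, C ≠ ⊤ ∧ ∀ (n : ℕ) (a : ℝ), 1 ≤ n → 0 ≤ a → a * n ≤ L → a ≤ 1 / 2 →
      ∫⁻ w, gw c β n w * ENNReal.ofReal (Real.exp (c * a * w)) ∂(gaussianReal 0 n)
        ≤ C * ENNReal.ofReal (Real.exp (-(c ^ 2 / 2 * n)) * (Real.sqrt n)⁻¹) := by
  set M : ℝ := (β + 2) * Real.exp (c ^ 2 * L + 2 * c * β) with hM
  have hM0 : 0 ≤ M := by positivity
  refine ⟨ENNReal.ofReal M * ∫⁻ u : ℝ, ENNReal.ofReal (Real.exp (-(|u| / 5))), ENNReal.mul_ne_top ENNReal.ofReal_ne_top lint_exp_abs, ?_⟩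
  intro n a hn ha han ha2
  have hn0 : (n : ℝ≥0) ≠ 0 := by exact_mod_cast (by omega : n ≠ 0)
  have hnpos : (0:ℝ) < n := by exact_mod_cast hn
  have hg := measurable_gw c β n
  rw [gaussianReal_of_var_ne_zero _ hn0,
    lintegral_withDensity_eq_lintegral_mul _ (measurable_gaussianPDF _ _) (by fun_prop),
    ← lintegral_sub_left_eq_self _ (c * n)]
  have hpt : ∀ u : ℝ, (gaussianPDF 0 n * fun w => gw c β n w * ENNReal.ofReal (Real.exp (c * a * w))) (c * n - u)
      ≤ ENNReal.ofReal (Real.exp (-(c ^ 2 / 2 * n)) * (Real.sqrt n)⁻¹) * (ENNReal.ofReal M * ENNReal.ofReal (Real.exp (-(|u| / 5)))) := by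
    intro u
    simp only [Pi.mul_apply, gaussianPDF, gw, sub_sub_cancel]
    split_ifs with hu
    · rw [← ENNReal.ofReal_mul (by positivity), ← ENNReal.ofReal_mul (gaussianPDFReal_nonneg _ _ _),
        ← ENNReal.ofReal_mul hM0, ← ENNReal.ofReal_mul (by positivity)]
      apply ENNReal.ofReal_le_ofReal
      have h1 : gaussianPDFReal 0 n (c * n - u) ≤ (Real.sqrt n)⁻¹ * Real.exp (-(c ^ 2 / 2 * n) + c * u) := by
        unfold gaussianPDFReal
        apply mul_le_mul _ _ (Real.exp_pos _).le (by positivity)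
        · apply inv_anti₀ (by positivity)
          apply Real.sqrt_le_sqrt
          push_cast
          nlinarith [Real.pi_gt_three]
        · apply Real.exp_le_exp.2
          push_cast
          rw [neg_div, neg_le, le_div_iff₀ (by positivity)]
          nlinarith [sq_nonneg u]
      have h2 : β + |u| ≤ (β + 2) * Real.exp (|u| / 2) := by
        have e1 := Real.add_one_le_exp (|u| / 2)
        have e2 := Real.one_le_exp (show 0 ≤ |u| / 2 by positivity)
        nlinarith
      have h3 : (c * u) + c * a * (c * n - u) + |u| / 2 ≤ c ^ 2 * L + 2 * c * β + -(|u| / 5) := by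
        have e1 : c * a * (c * n) ≤ c ^ 2 * L := by nlinarith [sq_nonneg c]
        have e2 : - (a * u) ≤ |u| / 2 := by
          have : -u ≤ |u| := neg_le_abs u
          have := abs_nonneg u
          nlinarith
        have e3 : c * u + c * |u| / 2 ≤ 2 * c * β - c * |u| / 2 := by
          rcases le_total 0 u with h | h
          · rw [abs_of_nonneg h]; nlinarith
          · rw [abs_of_nonpos h]; nlinarith
        have e4 : c * |u| / 2 ≥ 7/10 * |u| := by nlinarith [abs_nonneg u]
        nlinarith
      calc gaussianPDFReal 0 n (c * n - u) * ((β + |u|) * Real.exp (c * a * (c * n - u)))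
          ≤ ((Real.sqrt n)⁻¹ * Real.exp (-(c ^ 2 / 2 * n) + c * u)) * (((β + 2) * Real.exp (|u| / 2)) * Real.exp (c * a * (c * n - u))) := by
            gcongr
        _ = Real.exp (-(c ^ 2 / 2 * n)) * (Real.sqrt n)⁻¹ * ((β + 2) * Real.exp ((c * u) + c * a * (c * n - u) + |u| / 2)) := by
            rw [Real.exp_add, Real.exp_add, Real.exp_add]; ring
        _ ≤ Real.exp (-(c ^ 2 / 2 * n)) * (Real.sqrt n)⁻¹ * ((β + 2) * Real.exp (c ^ 2 * L + 2 * c * β + -(|u| / 5))) := by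
            gcongr
        _ = _ := by rw [Real.exp_add, hM]; ring
    · simp
  refine (lintegral_mono hpt).trans ?_
  rw [lintegral_const_mul' _ _ ENNReal.ofReal_ne_top, lintegral_const_mul' _ _ ENNReal.ofReal_ne_top, mul_comm]

lemma lint_exp_gauss (v : ℝ≥0) (t : ℝ) :
    ∫⁻ w, ENNReal.ofReal (Real.exp (t * w)) ∂(gaussianReal 0 v) = ENNReal.ofReal (Real.exp (v * t ^ 2 / 2)) := by
  rw [← ofReal_integral_eq_lintegral_ofReal (integrable_exp_mul_gaussianReal t)
    (Eventually.of_forall fun u => (Real.exp_pos _).le)]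
  congr 1
  have := congrFun (mgf_id_gaussianReal (μ := 0) (v := v)) t
  simpa [mgf] using this

lemma cauchy_schwarz_exp {α : Type*} [MeasurableSpace α] (μ : Measure α) (g : α → ℝ) (hg : Measurable g) :
    (μ Set.univ) ^ 2 ≤ (∫⁻ y, ENNReal.ofReal (Real.exp (g y)) ∂μ) * (∫⁻ y, ENNReal.ofReal (Real.exp (-(g y))) ∂μ) := by
  have := ENNReal.lintegral_mul_le_Lp_mul_Lq μ (p := 2) (q := 2) Real.HolderConjugate.two_two
    (f := fun y => ENNReal.ofReal (Real.exp (g y / 2))) (g := fun y => ENNReal.ofReal (Real.exp (-(g y / 2))))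
    (by fun_prop) (by fun_prop)
  have e1 : ∫⁻ y, ((fun y => ENNReal.ofReal (Real.exp (g y / 2))) * fun y => ENNReal.ofReal (Real.exp (-(g y / 2)))) y ∂μ
      = μ Set.univ := by
    rw [← lintegral_one]
    apply lintegral_congr; intro y
    simp only [Pi.mul_apply]
    rw [← ENNReal.ofReal_mul (Real.exp_pos _).le, ← Real.exp_add]; simp
  have e2 : ∀ t : ℝ, ENNReal.ofReal (Real.exp (t / 2)) ^ (2:ℝ) = ENNReal.ofReal (Real.exp t) := by
    intro t
    rw [ENNReal.rpow_two, ← ENNReal.ofReal_pow (Real.exp_pos _).le, ← Real.exp_nat_mul]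
    congr 2; push_cast; ring
  have e3 : ∀ t : ℝ, ENNReal.ofReal (Real.exp (-(t / 2))) ^ (2:ℝ) = ENNReal.ofReal (Real.exp (-t)) := by
    intro t
    rw [← e2 (-t)]; congr 3; ring
  rw [e1] at this
  simp only [e2, e3] at this
  calc (μ Set.univ) ^ 2 ≤ _ := pow_le_pow_left' this 2
    _ = _ := by
      rw [mul_pow, ← ENNReal.rpow_two, ← ENNReal.rpow_two, ← ENNReal.rpow_mul, ← ENNReal.rpow_mul]
      norm_num

section
set_option linter.unusedSectionVars false
variable {d : ℕ} {Ω : Type*} [MeasurableSpace Ω] {P : Measure Ω} [IsProbabilityMeasure P]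
  {Y : ℕ → EE d → Ω → ℝ} {R L : ℝ}

/-- Critical exponential density. -/
def md (c : ℝ) (Y : ℕ → EE d → Ω → ℝ) (n : ℕ) (x : EE d) (ω : Ω) : ℝ≥0∞ :=
  ENNReal.ofReal (Real.exp (c * Y n x ω - c ^ 2 / 2 * n))

lemma DF.meas_md (h : DF P Y R L) (c : ℝ) (n : ℕ) :
    Measurable (fun q : EE d × Ω => md c Y n q.1 q.2) := by
  have := h.joint n
  have h' : Measurable (fun q : EE d × Ω => Y n q.1 q.2) := this
  unfold md; fun_prop

lemma DF.lint_md (h : DF P Y R L) (c : ℝ) (n : ℕ) (x : EE d) :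
    ∫⁻ ω, md c Y n x ω ∂P = 1 := by
  have : ∫⁻ ω, md c Y n x ω ∂P = ∫⁻ w, ENNReal.ofReal (Real.exp (c * w)) * ENNReal.ofReal (Real.exp (-(c ^ 2 / 2 * n))) ∂(P.map (Y n x)) := by
    rw [lintegral_map (by fun_prop) (h.meas n x)]
    apply lintegral_congr; intro ω
    unfold md
    rw [← ENNReal.ofReal_mul (Real.exp_pos _).le, ← Real.exp_add]; rfl
  rw [this, lintegral_mul_const _ (by fun_prop), h.law, lint_exp_gauss, ← ENNReal.ofReal_mul (Real.exp_pos _).le,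
    ← Real.exp_add]
  simp; ring

lemma DF.pair_gw (h : DF P Y R L) {c β : ℝ} (hc : 7/5 ≤ c) (hβ : 0 ≤ β) (hL : 0 ≤ L) :
    ∃ C : ℝ≥0∞, C ≠ ⊤ ∧ ∀ (n : ℕ) (x y : EE d), 1 ≤ n → 2 * L ≤ n → ‖x - y‖ ≤ Real.exp (-(n:ℝ)) →
      ∫⁻ ω, gw c β n (Y n x ω) * ENNReal.ofReal (Real.exp (c * (Y n x ω - Y n y ω))) ∂P
        ≤ C * ENNReal.ofReal (Real.exp (-(c ^ 2 / 2 * n)) * (Real.sqrt n)⁻¹) := by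
  obtain ⟨C, hC, hCb⟩ := gw_bound hc hβ hL
  refine ⟨ENNReal.ofReal (Real.exp (L * c ^ 2)) * C, ENNReal.mul_ne_top ENNReal.ofReal_ne_top hC, ?_⟩
  intro n x y hn hnL hxy
  obtain ⟨a, v, ha, han, hv, hlaw, hind⟩ := h.loc n x y hn hxy
  have hnpos : (0:ℝ) < n := by exact_mod_cast hn
  have ha2 : a ≤ 1 / 2 := by
    by_contra hcon
    push Not at hcon
    nlinarith
  have hg := measurable_gw c β n
  have key := lint_indep (P := P) (((h.meas n x).sub (h.meas n y)).sub ((h.meas n x).const_mul a)) (h.meas n x) hind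
    (f := fun e w => ENNReal.ofReal (Real.exp (c * e)) * (gw c β n w * ENNReal.ofReal (Real.exp (c * a * w))))
    (by
      apply Measurable.mul
      · fun_prop
      · apply Measurable.mul
        · exact hg.comp measurable_snd
        · fun_prop)
  have e1 : ∀ ω, gw c β n (Y n x ω) * ENNReal.ofReal (Real.exp (c * (Y n x ω - Y n y ω)))
    = ENNReal.ofReal (Real.exp (c * (Y n x ω - Y n y ω - a * Y n x ω))) * (gw c β n (Y n x ω) * ENNReal.ofReal (Real.exp (c * a * (Y n x ω)))) := by
    intro ω
    rw [mul_left_comm, ← ENNReal.ofReal_mul (Real.exp_pos _).le, ← Real.exp_add]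
    congr 3; ring
  simp only [e1]
  refine (le_of_eq key).trans ?_
  have e2 : ∀ ω, ∫⁻ e, ENNReal.ofReal (Real.exp (c * e)) * (gw c β n (Y n x ω) * ENNReal.ofReal (Real.exp (c * a * (Y n x ω)))) ∂(P.map (fun ω => Y n x ω - Y n y ω - a * Y n x ω))
      = ENNReal.ofReal (Real.exp (v * c ^ 2 / 2)) * (gw c β n (Y n x ω) * ENNReal.ofReal (Real.exp (c * a * (Y n x ω)))) := by
    intro ω
    rw [lintegral_mul_const _ (by fun_prop), hlaw, lint_exp_gauss]
  refine (le_of_eq (lintegral_congr e2)).trans ?_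
  rw [lintegral_const_mul' _ _ ENNReal.ofReal_ne_top, mul_assoc]
  have hl := h.law n x
  have e3 : ∫⁻ ω, gw c β n (Y n x ω) * ENNReal.ofReal (Real.exp (c * a * (Y n x ω))) ∂P
      = ∫⁻ w, gw c β n w * ENNReal.ofReal (Real.exp (c * a * w)) ∂(gaussianReal 0 n) := by
    rw [← hl, lintegral_map (by fun_prop) (h.meas n x)]
  rw [e3]
  apply mul_le_mul'
  · apply ENNReal.ofReal_le_ofReal
    apply Real.exp_le_exp.2
    nlinarith [sq_nonneg c]
  · exact hCb n a hn ha han ha2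

/-- The mass of points close to the critical level. -/
def Fn (c β : ℝ) (Y : ℕ → EE d → Ω → ℝ) (A : Set (EE d)) (n : ℕ) (ω : Ω) : ℝ≥0∞ :=
  ∫⁻ x in A, gw c β n (Y n x ω) * md c Y n x ω

lemma DF.Fn_bound (h : DF P Y R L) {c β : ℝ} (hc : 7/5 ≤ c) (hβ : 0 ≤ β) (hL : 0 ≤ L)
    (hcd : c ^ 2 = 2 * d) {A A' : Set (EE d)} (hA : MeasurableSet A) (hAf : volume A ≠ ⊤)
    (hA' : ∀ x ∈ A, Metric.closedBall x 1 ⊆ A') :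
    ∃ C : ℝ≥0∞, C ≠ ⊤ ∧ ∀ (n : ℕ), 1 ≤ n → 2 * L ≤ n → ∀ (K : ℝ≥0∞) (T : ℝ≥0∞), T ≠ 0 → T ≠ ⊤ →
      ∫⁻ ω, min (3 * Fn c β Y A n ω) K ∂P
        ≤ 3 * T * (C * ENNReal.ofReal ((Real.sqrt n)⁻¹)) + K * T⁻¹ * volume A' := by
  obtain ⟨C, hC, hCb⟩ := h.pair_gw hc hβ hL
  set V : ℝ≥0∞ := volume (Metric.closedBall (0 : EE d) 1) with hV
  have hVf : V ≠ ⊤ := measure_closedBall_lt_top.ne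
  have hV0 : V ≠ 0 := (Metric.measure_closedBall_pos _ _ one_pos).ne'
  refine ⟨volume A * (V⁻¹ * C), ENNReal.mul_ne_top hAf (ENNReal.mul_ne_top (ENNReal.inv_ne_top.2 hV0) hC), ?_⟩
  intro n hn hnL K T hT0 hT
  set r : ℝ := Real.exp (-(n:ℝ)) with hr
  have hball : ∀ x : EE d, volume (Metric.closedBall x r) = ENNReal.ofReal (Real.exp (-(c ^ 2 / 2 * n))) * V := by
    intro x
    rw [Measure.addHaar_closedBall' _ _ (Real.exp_pos _).le, finrank_euclideanSpace, Fintype.card_fin,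
      ← Real.exp_nat_mul, hcd]
    congr 3
    ring
  set Bn : ℝ≥0∞ := ENNReal.ofReal (Real.exp (-(c ^ 2 / 2 * n))) * V with hBn
  have he0 : ENNReal.ofReal (Real.exp (-(c ^ 2 / 2 * n))) ≠ 0 := by simp [Real.exp_pos]
  have hBn0 : Bn ≠ 0 := mul_ne_zero he0 hV0
  have hBnf : Bn ≠ ⊤ := ENNReal.mul_ne_top ENNReal.ofReal_ne_top hVf
  have hjoint : Measurable (fun q : EE d × Ω => Y n q.1 q.2) := h.joint n
  have hYx : ∀ ω, Measurable (fun x => Y n x ω) := fun ω => (h.cont n ω).measurable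
  have hgwm : Measurable (fun q : EE d × Ω => gw c β n (Y n q.1 q.2)) := (measurable_gw c β n).comp hjoint
  have hmd := h.meas_md c n
  -- the inverse weight
  set I : EE d → Ω → ℝ≥0∞ := fun x ω => ∫⁻ y in Metric.closedBall x r,
    ENNReal.ofReal (Real.exp (-(c * Y n y ω - c ^ 2 / 2 * n))) with hI
  have hI' : ∀ x ω, I x ω = ∫⁻ y, (Set.indicator {q : EE d × EE d | dist q.2 q.1 ≤ r} (fun q => ENNReal.ofReal (Real.exp (-(c * Y n q.2 ω - c ^ 2 / 2 * n)))) (x, y)) := by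
    intro x ω
    rw [hI]; dsimp only
    rw [← lintegral_indicator Metric.isClosed_closedBall.measurableSet]
    apply lintegral_congr; intro y
    simp [Set.indicator, Metric.mem_closedBall]
  have hset : MeasurableSet {q : (EE d × Ω) × EE d | dist q.2 q.1.1 ≤ r} :=
    measurableSet_le (by fun_prop) measurable_const
  have hexpm : Measurable (fun q : (EE d × Ω) × EE d => ENNReal.ofReal (Real.exp (-(c * Y n q.2 q.1.2 - c ^ 2 / 2 * n)))) := by
    have : Measurable (fun q : (EE d × Ω) × EE d => Y n q.2 q.1.2) :=
      hjoint.comp (by fun_prop : Measurable (fun q : (EE d × Ω) × EE d => (q.2, q.1.2)))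
    fun_prop
  have hIm : Measurable (fun q : EE d × Ω => I q.1 q.2) := by
    simp only [hI']
    exact Measurable.lintegral_prod_right' (f := fun q : (EE d × Ω) × EE d =>
      (Set.indicator {q : (EE d × Ω) × EE d | dist q.2 q.1.1 ≤ r} (fun q => ENNReal.ofReal (Real.exp (-(c * Y n q.2 q.1.2 - c ^ 2 / 2 * n)))) q))
      (hexpm.indicator hset)
  set G : Ω → ℝ≥0∞ := fun ω => ∫⁻ x in A', md c Y n x ω with hG
  have hcs : ∀ x ∈ A, ∀ ω, 1 ≤ G ω * ((Bn ^ 2)⁻¹ * I x ω) := by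
    intro x hx ω
    have h1 := cauchy_schwarz_exp (volume.restrict (Metric.closedBall x r)) (fun y => c * Y n y ω - c ^ 2 / 2 * n)
      (by have := hYx ω; fun_prop)
    rw [Measure.restrict_apply_univ, hball] at h1
    have h2 : (∫⁻ y in Metric.closedBall x r, ENNReal.ofReal (Real.exp (c * Y n y ω - c ^ 2 / 2 * n))) ≤ G ω := by
      rw [hG]
      apply lintegral_mono_set
      refine (Metric.closedBall_subset_closedBall ?_).trans (hA' x hx)
      rw [hr]; exact Real.exp_le_one_iff.2 (by simp)
    have h3 : Bn ^ 2 ≤ G ω * I x ω := h1.trans (mul_le_mul_left h2 _)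
    rw [mul_left_comm]
    calc (1 : ℝ≥0∞) = (Bn ^ 2)⁻¹ * Bn ^ 2 := (ENNReal.inv_mul_cancel (pow_ne_zero _ hBn0) (ENNReal.pow_ne_top hBnf)).symm
      _ ≤ _ := mul_le_mul_right h3 _
  set W : Ω → ℝ≥0∞ := fun ω => ∫⁻ x in A, gw c β n (Y n x ω) * md c Y n x ω * ((Bn ^ 2)⁻¹ * I x ω) with hW
  have hWm : Measurable (fun q : EE d × Ω => gw c β n (Y n q.1 q.2) * md c Y n q.1 q.2 * ((Bn ^ 2)⁻¹ * I q.1 q.2)) :=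
    (hgwm.mul hmd).mul (hIm.const_mul _)
  have hFW : ∀ ω, Fn c β Y A n ω ≤ G ω * W ω := by
    intro ω
    rw [hW]; dsimp only
    have hm : Measurable (fun x => gw c β n (Y n x ω) * md c Y n x ω * ((Bn ^ 2)⁻¹ * I x ω)) :=
      hWm.comp (measurable_id.prodMk measurable_const)
    rw [← lintegral_const_mul _ hm]
    unfold Fn
    apply setLIntegral_mono_ae' hA
    refine Eventually.of_forall fun x hx => ?_
    calc gw c β n (Y n x ω) * md c Y n x ω = gw c β n (Y n x ω) * md c Y n x ω * 1 := (mul_one _).symm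
      _ ≤ gw c β n (Y n x ω) * md c Y n x ω * (G ω * ((Bn ^ 2)⁻¹ * I x ω)) := mul_le_mul_right (hcs x hx ω) _
      _ = _ := by ring
  have hmin : ∀ ω, min (3 * Fn c β Y A n ω) K ≤ 3 * T * W ω + K * T⁻¹ * G ω := by
    intro ω
    rcases le_total (G ω) T with hGT | hGT
    · refine (min_le_left _ _).trans (le_trans ?_ le_self_add)
      rw [mul_assoc]
      exact mul_le_mul_right ((hFW ω).trans (mul_le_mul_left hGT _)) _
    · refine (min_le_right _ _).trans (le_trans ?_ le_add_self)
      rw [mul_assoc]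
      calc K = K * (T⁻¹ * T) := by rw [ENNReal.inv_mul_cancel hT0 hT, mul_one]
        _ ≤ _ := mul_le_mul_right (mul_le_mul_right hGT _) _
  have hGm : Measurable G := by
    have : Measurable (fun q : Ω × EE d => md c Y n q.2 q.1) := hmd.comp measurable_swap
    exact this.lintegral_prod_right'
  have hWm' : Measurable W := by
    have := hWm.comp (measurable_swap (α := Ω) (β := EE d))
    exact this.lintegral_prod_right'
  have hEG : ∫⁻ ω, G ω ∂P = volume A' := by
    rw [hG]
    have hsw := lintegral_lintegral_swap (μ := P) (ν := volume.restrict A') (f := fun ω x => md c Y n x ω)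
      (hmd.comp measurable_swap).aemeasurable
    rw [hsw]
    simp [h.lint_md]
  have hEW : ∫⁻ ω, W ω ∂P ≤ volume A * (V⁻¹ * C) * ENNReal.ofReal ((Real.sqrt n)⁻¹) := by
    rw [hW]
    have hsw := lintegral_lintegral_swap (μ := P) (ν := volume.restrict A)
      (f := fun ω x => gw c β n (Y n x ω) * md c Y n x ω * ((Bn ^ 2)⁻¹ * I x ω))
      (hWm.comp measurable_swap).aemeasurable
    rw [hsw]
    have hx : ∀ x : EE d, ∫⁻ ω, gw c β n (Y n x ω) * md c Y n x ω * ((Bn ^ 2)⁻¹ * I x ω) ∂P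
        ≤ (V⁻¹ * C) * ENNReal.ofReal ((Real.sqrt n)⁻¹) := by
      intro x
      have hm1 : Measurable (fun ω => gw c β n (Y n x ω) * md c Y n x ω) :=
        (hgwm.mul hmd).comp (measurable_const.prodMk measurable_id)
      have hm2 : Measurable (fun q : Ω × EE d => ENNReal.ofReal (Real.exp (-(c * Y n q.2 q.1 - c ^ 2 / 2 * n)))) := by
        have : Measurable (fun q : Ω × EE d => Y n q.2 q.1) := hjoint.comp measurable_swap
        fun_prop
      calc ∫⁻ ω, gw c β n (Y n x ω) * md c Y n x ω * ((Bn ^ 2)⁻¹ * I x ω) ∂P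
          = (Bn ^ 2)⁻¹ * ∫⁻ ω, (∫⁻ y in Metric.closedBall x r, gw c β n (Y n x ω) * md c Y n x ω *
              ENNReal.ofReal (Real.exp (-(c * Y n y ω - c ^ 2 / 2 * n)))) ∂P := by
            rw [← lintegral_const_mul' _ _ (ENNReal.inv_ne_top.2 (pow_ne_zero _ hBn0))]
            apply lintegral_congr; intro ω
            rw [mul_left_comm]
            congr 1
            have hm3 : Measurable (fun y => ENNReal.ofReal (Real.exp (-(c * Y n y ω - c ^ 2 / 2 * n)))) :=
              hm2.comp (measurable_const.prodMk measurable_id)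
            rw [lintegral_const_mul _ hm3]
        _ = (Bn ^ 2)⁻¹ * ∫⁻ y in Metric.closedBall x r, ∫⁻ ω, gw c β n (Y n x ω) * md c Y n x ω *
              ENNReal.ofReal (Real.exp (-(c * Y n y ω - c ^ 2 / 2 * n))) ∂P := by
            rw [lintegral_lintegral_swap]
            exact ((hm1.comp measurable_fst).mul hm2).aemeasurable
        _ ≤ (Bn ^ 2)⁻¹ * ∫⁻ y in Metric.closedBall x r, C * ENNReal.ofReal (Real.exp (-(c ^ 2 / 2 * n)) * (Real.sqrt n)⁻¹) := by
            apply mul_le_mul_right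
            apply setLIntegral_mono_ae' Metric.isClosed_closedBall.measurableSet
            refine Eventually.of_forall fun y hy => ?_
            rw [Metric.mem_closedBall, dist_comm, dist_eq_norm] at hy
            refine le_trans (le_of_eq ?_) (hCb n x y hn hnL hy)
            apply lintegral_congr; intro ω
            unfold md
            rw [mul_assoc, ← ENNReal.ofReal_mul (Real.exp_pos _).le, ← Real.exp_add]
            congr 3; ring
        _ = _ := by
            rw [lintegral_const, Measure.restrict_apply_univ, hball, ENNReal.ofReal_mul (Real.exp_pos _).le]
            have hb1 : (Bn ^ 2)⁻¹ * Bn = Bn⁻¹ := by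
              rw [sq, ENNReal.mul_inv (Or.inl hBn0) (Or.inl hBnf), mul_assoc, ENNReal.inv_mul_cancel hBn0 hBnf, mul_one]
            have hb2 : Bn⁻¹ * ENNReal.ofReal (Real.exp (-(c ^ 2 / 2 * n))) = V⁻¹ := by
              rw [hBn, ENNReal.mul_inv (Or.inl he0) (Or.inl ENNReal.ofReal_ne_top), mul_right_comm,
                ENNReal.inv_mul_cancel he0 ENNReal.ofReal_ne_top, one_mul]
            rw [← hb2, ← hb1]; ring
    refine (lintegral_mono hx).trans ?_
    rw [lintegral_const, Measure.restrict_apply_univ]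
    apply le_of_eq; ring
  calc ∫⁻ ω, min (3 * Fn c β Y A n ω) K ∂P ≤ ∫⁻ ω, (3 * T * W ω + K * T⁻¹ * G ω) ∂P := lintegral_mono hmin
    _ = 3 * T * ∫⁻ ω, W ω ∂P + K * T⁻¹ * ∫⁻ ω, G ω ∂P := by
        rw [lintegral_add_left (hWm'.const_mul _), lintegral_const_mul _ hWm', lintegral_const_mul _ hGm]
    _ ≤ _ := by
        rw [hEG]
        exact add_le_add_left (mul_le_mul_right hEW _) _

end

end

section
open MeasureTheory ProbabilityTheory Filter

noncomputable section

open scoped ENNReal NNReal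

section
set_option linter.unusedSectionVars false
variable {d : ℕ} {Ω : Type*} [MeasurableSpace Ω] {P : Measure Ω} [IsProbabilityMeasure P]
  {Y : ℕ → EE d → Ω → ℝ} {R L : ℝ}

/-- The derivative martingale at integer times. -/
def Mn (c : ℝ) (Y : ℕ → EE d → Ω → ℝ) (A : Set (EE d)) (n : ℕ) (ω : Ω) : ℝ :=
  ∫ x in A, (c * n - Y n x ω) * Real.exp (c * Y n x ω - c ^ 2 / 2 * n)

lemma DF.meas_Mn (h : DF P Y R L) (c : ℝ) (A : Set (EE d)) (n : ℕ) :
    Measurable (Mn c Y A n) := by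
  have hj : Measurable (fun q : Ω × EE d => Y n q.2 q.1) := (h.joint n).comp measurable_swap
  have hm : Measurable (fun q : Ω × EE d => (c * n - Y n q.2 q.1) *
      Real.exp (c * Y n q.2 q.1 - c ^ 2 / 2 * n)) :=
    (measurable_const.sub hj).mul ((hj.const_mul c).sub_const _).exp
  exact (hm.stronglyMeasurable.integral_prod_right' (ν := volume.restrict A)).measurable

lemma zz_le (c : ℝ) {β : ℝ} (hβ : 0 ≤ β) (n : ℕ) (x : EE d) (ω : Ω) :
    zz c β Y n x ω ≤ 2 * ENNReal.ofReal ((c * n - Y n x ω) * Real.exp (c * Y n x ω - c ^ 2 / 2 * n))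
      + gw c β n (Y n x ω) * md c Y n x ω := by
  have h1 : zz c β Y n x ω ≤ md c Y n x ω * ENNReal.ofReal (β + c * n - Y n x ω) := by
    unfold zz aP md bP pth
    split_ifs
    · exact le_rfl
    · simp
  refine h1.trans ?_
  unfold md gw
  split_ifs with hb
  · refine le_trans ?_ le_add_self
    rw [mul_comm]
    apply mul_le_mul_left
    apply ENNReal.ofReal_le_ofReal
    have := le_abs_self (c * n - Y n x ω)
    linarith
  · refine le_trans ?_ le_self_add
    have h2 : (2 : ℝ≥0∞) = ENNReal.ofReal 2 := by simp
    rw [h2, ← ENNReal.ofReal_mul (Real.exp_pos _).le, ← ENNReal.ofReal_mul (by norm_num)]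
    apply ENNReal.ofReal_le_ofReal
    push Not at hb
    have := Real.exp_pos (c * Y n x ω - c ^ 2 / 2 * n)
    nlinarith

lemma neg_le_gw (c : ℝ) {β : ℝ} (hβ : 0 < β) (n : ℕ) (x : EE d) (ω : Ω) :
    ENNReal.ofReal (-((c * n - Y n x ω) * Real.exp (c * Y n x ω - c ^ 2 / 2 * n)))
      ≤ gw c β n (Y n x ω) * md c Y n x ω := by
  unfold md gw
  have he := Real.exp_pos (c * Y n x ω - c ^ 2 / 2 * n)
  split_ifs with hb
  · rw [← ENNReal.ofReal_mul (by positivity)]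
    apply ENNReal.ofReal_le_ofReal
    have := neg_le_abs (c * n - Y n x ω)
    nlinarith
  · push Not at hb
    rw [ENNReal.ofReal_of_nonpos]
    · simp
    · have : 0 ≤ c * n - Y n x ω := by linarith
      have := mul_nonneg this he.le
      linarith

lemma DF.Zn_le (h : DF P Y R L) (c : ℝ) {β : ℝ} (hβ : 0 < β)
    {A : Set (EE d)} (hb : Bornology.IsBounded A) (n : ℕ) (ω : Ω) :
    ∫⁻ x in A, zz c β Y n x ω ≤ 2 * ENNReal.ofReal (Mn c Y A n ω) + 3 * Fn c β Y A n ω := by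
  set f : EE d → ℝ := fun x => (c * n - Y n x ω) * Real.exp (c * Y n x ω - c ^ 2 / 2 * n) with hf
  have hYc := h.cont n ω
  have hfc : Continuous f := by rw [hf]; fun_prop
  have hfi : Integrable f (volume.restrict A) := by
    have h1 : IntegrableOn f (closure A) volume :=
      hfc.continuousOn.integrableOn_compact hb.isCompact_closure
    exact h1.mono_set subset_closure
  set Pp : ℝ≥0∞ := ∫⁻ x in A, ENNReal.ofReal (f x) with hPp
  set Nn : ℝ≥0∞ := ∫⁻ x in A, ENNReal.ofReal (-f x) with hNn
  have hM : Mn c Y A n ω = Pp.toReal - Nn.toReal :=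
    integral_eq_lintegral_pos_part_sub_lintegral_neg_part hfi
  have hPf : Pp ≠ ⊤ := hfi.lintegral_lt_top.ne
  have hNf : Nn ≠ ⊤ := hfi.neg.lintegral_lt_top.ne
  have hNF : Nn ≤ Fn c β Y A n ω := lintegral_mono fun x => neg_le_gw c hβ n x ω
  have hPM : Pp ≤ ENNReal.ofReal (Mn c Y A n ω) + Nn := by
    calc Pp = ENNReal.ofReal (Mn c Y A n ω + Nn.toReal) := by
            rw [hM, sub_add_cancel, ENNReal.ofReal_toReal hPf]
      _ ≤ ENNReal.ofReal (Mn c Y A n ω) + ENNReal.ofReal Nn.toReal := ENNReal.ofReal_add_le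
      _ = _ := by rw [ENNReal.ofReal_toReal hNf]
  have hfm : Measurable (fun x => 2 * ENNReal.ofReal (f x)) := by
    have := hfc.measurable
    fun_prop
  calc ∫⁻ x in A, zz c β Y n x ω
      ≤ ∫⁻ x in A, (2 * ENNReal.ofReal (f x) + gw c β n (Y n x ω) * md c Y n x ω) :=
        lintegral_mono fun x => zz_le c hβ.le n x ω
    _ = 2 * Pp + Fn c β Y A n ω := by
        rw [lintegral_add_left hfm, lintegral_const_mul _ (by have := hfc.measurable; fun_prop)]; rfl
    _ ≤ 2 * (ENNReal.ofReal (Mn c Y A n ω) + Fn c β Y A n ω) + Fn c β Y A n ω := by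
        gcongr
        exact hPM.trans (add_le_add_right hNF _)
    _ = _ := by ring

theorem DF.concl (h : DF P Y R L) (hR : 0 < R) (hL : 0 ≤ L) {c : ℝ} (hc : 7/5 ≤ c)
    (hcd : c ^ 2 = 2 * d) {A : Set (EE d)} (hne : A.Nonempty) (hAo : IsOpen A)
    (hb : Bornology.IsBounded A) (hAR : ∀ x ∈ A, ∀ y ∈ A, ‖x - y‖ ≤ R) {M' : Ω → ℝ}
    (hM : ∀ᵐ ω ∂P, Tendsto (fun n : ℕ => Mn c Y A n ω) atTop (nhds (M' ω))) :
    ∫⁻ ω, ENNReal.ofReal (M' ω) ∂P = ⊤ := by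
  have hA := hAo.measurableSet
  have hAf : volume A ≠ ⊤ := hb.measure_lt_top.ne
  have hA0 : volume A ≠ 0 := (hAo.measure_pos volume hne).ne'
  set A' : Set (EE d) := Metric.cthickening 1 A with hA'd
  have hA'f : volume A' ≠ ⊤ := (hb.cthickening).measure_lt_top.ne
  have hA' : ∀ x ∈ A, Metric.closedBall x 1 ⊆ A' := fun x hx =>
    Metric.closedBall_subset_cthickening hx 1
  have key : ∀ β : ℝ, 0 < β → ENNReal.ofReal β * volume A ≤ 2 * ∫⁻ ω, ENNReal.ofReal (M' ω) ∂P := by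
    intro β hβ
    obtain ⟨C, hC, hC2⟩ := h.second_moment hR hβ.le hc hcd hA hAf hAR
    obtain ⟨C', hC', hF⟩ := h.Fn_bound hc hβ.le hL hcd hA hAf hA'
    set Z : ℕ → Ω → ℝ≥0∞ := fun n ω => ∫⁻ x in A, zz c β Y n x ω with hZ
    have hzm : ∀ n, Measurable (fun q : Ω × EE d => zz c β Y n q.2 q.1) := fun n =>
      (h.meas_zz c β n).comp measurable_swap
    have hZm : ∀ n, Measurable (Z n) := fun n => (hzm n).lintegral_prod_right'
    have hEZ : ∀ n, ENNReal.ofReal β * volume A ≤ ∫⁻ ω, Z n ω ∂P := by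
      intro n
      have hsw := lintegral_lintegral_swap (μ := P) (ν := volume.restrict A)
        (f := fun ω x => zz c β Y n x ω) (hzm n).aemeasurable
      rw [hZ]
      dsimp only
      rw [hsw]
      calc ENNReal.ofReal β * volume A = ∫⁻ x in A, ENNReal.ofReal β := by simp
        _ ≤ _ := lintegral_mono fun x => h.first_moment c hβ.le n x
    have step1 : ∀ (K : ℝ≥0∞), K ≠ 0 → K ≠ ⊤ → ∀ T : ℝ≥0∞, T ≠ 0 → T ≠ ⊤ → ∀ n : ℕ, 1 ≤ n → 2 * L ≤ n →
        ENNReal.ofReal β * volume A ≤ 2 * ∫⁻ ω, min (ENNReal.ofReal (Mn c Y A n ω)) K ∂P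
          + (3 * T * (C' * ENNReal.ofReal ((Real.sqrt n)⁻¹)) + K * T⁻¹ * volume A') + C * K⁻¹ := by
      intro K hK0 hK T hT0 hT n hn hnL
      have hpt : ∀ ω, Z n ω ≤ 2 * min (ENNReal.ofReal (Mn c Y A n ω)) K
          + min (3 * Fn c β Y A n ω) K + Z n ω ^ 2 * K⁻¹ := by
        intro ω
        have hle := h.Zn_le c hβ hb n ω
        rcases le_total (Z n ω) K with hZK | hZK
        · refine le_trans ?_ le_self_add
          rcases le_total (ENNReal.ofReal (Mn c Y A n ω)) K with h1 | h1
          · rcases le_total (3 * Fn c β Y A n ω) K with h2 | h2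
            · rw [min_eq_left h1, min_eq_left h2]; exact hle
            · rw [min_eq_right h2]; exact hZK.trans le_add_self
          · rw [min_eq_right h1]
            refine hZK.trans (le_trans ?_ le_self_add)
            rw [two_mul]; exact le_self_add
        · refine le_trans ?_ le_add_self
          calc Z n ω = Z n ω * (K * K⁻¹) := by rw [ENNReal.mul_inv_cancel hK0 hK, mul_one]
            _ ≤ Z n ω * (Z n ω * K⁻¹) := by gcongr
            _ = _ := by ring
      have hMm : Measurable (fun ω => min (ENNReal.ofReal (Mn c Y A n ω)) K) :=
        (h.meas_Mn c A n).ennreal_ofReal.min measurable_const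
      have hZ2 : Measurable (fun ω => Z n ω ^ 2 * K⁻¹) := ((hZm n).pow_const 2).mul_const _
      calc ENNReal.ofReal β * volume A ≤ ∫⁻ ω, Z n ω ∂P := hEZ n
        _ ≤ ∫⁻ ω, (2 * min (ENNReal.ofReal (Mn c Y A n ω)) K
          + min (3 * Fn c β Y A n ω) K + Z n ω ^ 2 * K⁻¹) ∂P := lintegral_mono hpt
        _ = 2 * ∫⁻ ω, min (ENNReal.ofReal (Mn c Y A n ω)) K ∂P
          + ∫⁻ ω, min (3 * Fn c β Y A n ω) K ∂P + (∫⁻ ω, Z n ω ^ 2 ∂P) * K⁻¹ := by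
            rw [lintegral_add_right _ hZ2, lintegral_add_left (hMm.const_mul _),
              lintegral_const_mul _ hMm, lintegral_mul_const _ ((hZm n).pow_const 2)]
        _ ≤ _ := by
            gcongr
            · exact hF n hn hnL K T hT0 hT
            · exact hC2 n
    have step2 : ∀ (K : ℝ≥0∞), K ≠ 0 → K ≠ ⊤ → ∀ T : ℝ≥0∞, T ≠ 0 → T ≠ ⊤ →
        ENNReal.ofReal β * volume A ≤ 2 * ∫⁻ ω, ENNReal.ofReal (M' ω) ∂P
          + (0 + K * T⁻¹ * volume A') + C * K⁻¹ := by
      intro K hK0 hK T hT0 hT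
      have hlim1 : Tendsto (fun n : ℕ => ∫⁻ ω, min (ENNReal.ofReal (Mn c Y A n ω)) K ∂P) atTop
          (nhds (∫⁻ ω, min (ENNReal.ofReal (M' ω)) K ∂P)) := by
        apply tendsto_lintegral_of_dominated_convergence (fun _ => K)
        · exact fun n => (h.meas_Mn c A n).ennreal_ofReal.min measurable_const
        · exact fun n => Eventually.of_forall fun ω => min_le_right _ _
        · simpa using hK
        · filter_upwards [hM] with ω hω
          exact (ENNReal.tendsto_ofReal hω).min tendsto_const_nhds
      have hlim2 : Tendsto (fun n : ℕ => 3 * T * (C' * ENNReal.ofReal ((Real.sqrt n)⁻¹))) atTop (nhds 0) := by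
        have h1 : Tendsto (fun n : ℕ => ENNReal.ofReal ((Real.sqrt n)⁻¹)) atTop (nhds 0) := by
          rw [← ENNReal.ofReal_zero]
          apply ENNReal.tendsto_ofReal
          exact tendsto_inv_atTop_zero.comp (Real.tendsto_sqrt_atTop.comp tendsto_natCast_atTop_atTop)
        have h2 := ENNReal.Tendsto.const_mul h1 (a := 3 * T * C') (Or.inr (by finiteness))
        simpa [mul_assoc] using h2
      have hlim : Tendsto (fun n : ℕ => 2 * ∫⁻ ω, min (ENNReal.ofReal (Mn c Y A n ω)) K ∂P
          + (3 * T * (C' * ENNReal.ofReal ((Real.sqrt n)⁻¹)) + K * T⁻¹ * volume A') + C * K⁻¹) atTop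
          (nhds (2 * ∫⁻ ω, min (ENNReal.ofReal (M' ω)) K ∂P + (0 + K * T⁻¹ * volume A') + C * K⁻¹)) :=
        ((ENNReal.Tendsto.const_mul hlim1 (Or.inr (by simp))).add (hlim2.add tendsto_const_nhds)).add
          tendsto_const_nhds
      have hle := ge_of_tendsto hlim (by
        filter_upwards [eventually_ge_atTop 1, eventually_ge_atTop ⌈2 * L⌉₊] with n hn hn2
        exact step1 K hK0 hK T hT0 hT n hn (Nat.ceil_le.1 hn2))
      refine hle.trans ?_
      gcongr
      exact min_le_left _ _
    have hinv : Tendsto (fun m : ℕ => ((m + 1 : ℕ) : ℝ≥0∞)⁻¹) atTop (nhds 0) :=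
      ENNReal.tendsto_inv_nat_nhds_zero.comp (tendsto_add_atTop_nat 1)
    have step3 : ∀ (K : ℝ≥0∞), K ≠ 0 → K ≠ ⊤ →
        ENNReal.ofReal β * volume A ≤ 2 * ∫⁻ ω, ENNReal.ofReal (M' ω) ∂P + C * K⁻¹ := by
      intro K hK0 hK
      have h1 : Tendsto (fun m : ℕ => K * ((m + 1 : ℕ) : ℝ≥0∞)⁻¹ * volume A') atTop (nhds (K * 0 * volume A')) :=
        ENNReal.Tendsto.mul_const (ENNReal.Tendsto.const_mul hinv (Or.inr hK)) (Or.inr hA'f)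
      have h2 := ((tendsto_const_nhds (x := 2 * ∫⁻ ω, ENNReal.ofReal (M' ω) ∂P)).add
        ((tendsto_const_nhds (x := (0 : ℝ≥0∞))).add h1)).add (tendsto_const_nhds (x := C * K⁻¹))
      have h3 := ge_of_tendsto' h2 (fun m => step2 K hK0 hK ((m + 1 : ℕ) : ℝ≥0∞) (by simp) (by simp))
      simpa using h3
    have h1 : Tendsto (fun m : ℕ => C * ((m + 1 : ℕ) : ℝ≥0∞)⁻¹) atTop (nhds (C * 0)) :=
      ENNReal.Tendsto.const_mul hinv (Or.inr hC)
    have h2 := (tendsto_const_nhds (x := 2 * ∫⁻ ω, ENNReal.ofReal (M' ω) ∂P)).add h1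
    have h3 := ge_of_tendsto' h2 (fun m => step3 ((m + 1 : ℕ) : ℝ≥0∞) (by simp) (by simp))
    simpa using h3
  by_contra htop
  have hfin : 2 * ∫⁻ ω, ENNReal.ofReal (M' ω) ∂P ≠ ⊤ := ENNReal.mul_ne_top (by simp) htop
  have hlim : Tendsto (fun m : ℕ => ENNReal.ofReal ((m : ℝ) + 1) * volume A) atTop (nhds (⊤ * volume A)) := by
    apply ENNReal.Tendsto.mul_const
    · exact ENNReal.tendsto_ofReal_atTop.comp
        ((tendsto_natCast_atTop_atTop).atTop_add tendsto_const_nhds)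
    · left; simp
  have := le_of_tendsto' hlim (fun m => key ((m : ℝ) + 1) (by positivity))
  rw [ENNReal.top_mul hA0] at this
  exact hfin (top_le_iff.1 this)

end

end

end

section
open MeasureTheory ProbabilityTheory Filter

noncomputable section

open scoped ENNReal NNReal

/-- The standing assumptions on the field, bundled. -/
structure Fld {d : ℕ} {Ω : Type*} [MeasurableSpace Ω] (P : Measure Ω) (k : EE d → ℝ)
    (X : ℝ → EE d → Ω → ℝ) : Prop where
  k1 : ContDiff ℝ 1 k
  k0 : k 0 = 1
  kb : ∀ z, |k z| ≤ 1
  ksupp : HasCompactSupport k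
  meas : ∀ t x, Measurable (X t x)
  gauss : ∀ (n : ℕ) (c : Fin n → ℝ) (t : Fin n → ℝ) (x : Fin n → EE d),
      ∃ v : NNReal, Measure.map (fun ω => ∑ i, c i * X (t i) (x i) ω) P = gaussianReal 0 v
  cov : ∀ t, 0 ≤ t → ∀ x y : EE d,
      ∫ ω, X t x ω * X t y ω ∂P = ∫ u in Set.Icc (1:ℝ) (Real.exp t), k (u • (x - y)) / u
  cont : ∀ᵐ ω ∂P, Continuous fun p : ℝ × EE d => X p.1 p.2 ω
  indep : ∀ s t : ℝ, 0 ≤ s → s < t →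
      Indep (⨆ x : EE d, MeasurableSpace.comap (fun ω => X t x ω - X s x ω) inferInstance)
        (⨆ u ∈ Set.Icc (0:ℝ) s, ⨆ x : EE d, MeasurableSpace.comap (X u x) inferInstance) P

section
set_option linter.unusedSectionVars false
variable {d : ℕ} {Ω : Type*} [MeasurableSpace Ω] {P : Measure Ω} [IsProbabilityMeasure P]
  {k : EE d → ℝ} {X : ℝ → EE d → Ω → ℝ}

/-- The linear span of the field. -/
def SX (X : ℝ → EE d → Ω → ℝ) : Submodule ℝ (Ω → ℝ) :=
  Submodule.span ℝ (Set.range fun p : ℝ × EE d => X p.1 p.2)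

lemma mem_SX (X : ℝ → EE d → Ω → ℝ) (t : ℝ) (x : EE d) : X t x ∈ SX X :=
  Submodule.subset_span ⟨(t, x), rfl⟩

lemma Fld.exv (h : Fld P k X) {U : Ω → ℝ} (hU : U ∈ SX X) :
    Measurable U ∧ ∃ v : ℝ≥0, P.map U = gaussianReal 0 v := by
  obtain ⟨n, f, g, hg⟩ := Submodule.mem_span_set'.1 hU
  choose q hq using fun i => (g i).2
  have hUe : U = fun ω => ∑ i, f i * X (q i).1 (q i).2 ω := by
    rw [← hg]
    funext ω
    rw [Finset.sum_apply]
    refine Finset.sum_congr rfl fun i _ => ?_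
    rw [← hq i]; rfl
  refine ⟨?_, ?_⟩
  · rw [hUe]
    exact Finset.measurable_sum _ fun i _ => (h.meas _ _).const_mul _
  · rw [hUe]
    exact h.gauss n f (fun i => (q i).1) (fun i => (q i).2)

lemma Fld.memLp (h : Fld P k X) {U : Ω → ℝ} (hU : U ∈ SX X) : MemLp U 2 P := by
  obtain ⟨hm, v, hv⟩ := h.exv hU
  have h1 : MemLp id 2 (P.map U) := by rw [hv]; exact memLp_id_gaussianReal 2
  simpa using (memLp_map_measure_iff aestronglyMeasurable_id hm.aemeasurable).1 h1

lemma Fld.mean (h : Fld P k X) {U : Ω → ℝ} (hU : U ∈ SX X) : ∫ ω, U ω ∂P = 0 := by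
  obtain ⟨hm, v, hv⟩ := h.exv hU
  have h1 : ∫ x, id x ∂(P.map U) = 0 := by rw [hv]; simp
  rwa [integral_map hm.aemeasurable aestronglyMeasurable_id] at h1

lemma Fld.law (h : Fld P k X) {U : Ω → ℝ} (hU : U ∈ SX X) {v : ℝ≥0}
    (hv : ∫ ω, U ω * U ω ∂P = v) : P.map U = gaussianReal 0 v := by
  obtain ⟨hm, w, hw⟩ := h.exv hU
  have h1 : Var[id; P.map U] = w := by rw [hw, variance_id_gaussianReal]
  rw [variance_id_map hm.aemeasurable, variance_of_integral_eq_zero hm.aemeasurable (h.mean hU)] at h1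
  have h2 : (w : ℝ) = v := by
    rw [← h1, ← hv]; congr 1; funext ω; ring
  rw [hw, NNReal.coe_injective h2]

lemma Fld.indepFun (h : Fld P k X) {U V : Ω → ℝ} (hU : U ∈ SX X) (hV : V ∈ SX X)
    (h0 : ∫ ω, U ω * V ω ∂P = 0) : IndepFun U V P := by
  have hUm := (h.exv hU).1
  have hVm := (h.exv hV).1
  have hg : HasGaussianLaw (fun ω => (U ω, V ω)) P := by
    refine ⟨isGaussian_of_map_eq_gaussianReal fun l => ⟨0, ?_⟩⟩
    have hW : (l (1, 0)) • U + (l (0, 1)) • V ∈ SX X :=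
      Submodule.add_mem _ (Submodule.smul_mem _ _ hU) (Submodule.smul_mem _ _ hV)
    obtain ⟨_, v, hv⟩ := h.exv hW
    refine ⟨v, ?_⟩
    rw [Measure.map_map (by fun_prop) (hUm.prodMk hVm), ← hv]
    congr 1
    funext ω
    have : ((U ω, V ω) : ℝ × ℝ) = U ω • (1, 0) + V ω • (0, 1) := by simp
    simp only [Function.comp_apply]
    rw [this, map_add, map_smul, map_smul]
    simp [mul_comm]
  apply hg.indepFun_of_covariance_eq_zero
  rw [covariance_eq_sub (h.memLp hU) (h.memLp hV), h.mean hU]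
  simpa using h0

/-- the covariance function -/
def qq (k : EE d → ℝ) (t : ℝ) (z : EE d) : ℝ :=
  ∫ u in Set.Icc (1:ℝ) (Real.exp t), k (u • z) / u

lemma Fld.integ (h : Fld P k X) {U V : Ω → ℝ} (hU : U ∈ SX X) (hV : V ∈ SX X) :
    Integrable (fun ω => U ω * V ω) P := (h.memLp hU).integrable_mul (h.memLp hV)

lemma Fld.cross (h : Fld P k X) {s t : ℝ} (hs : 0 ≤ s) (hst : s < t) (x y : EE d) :
    ∫ ω, X t x ω * X s y ω ∂P = qq k s (x - y) := by
  have hI : IndepFun (fun ω => X t x ω - X s x ω) (X s y) P := by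
    rw [IndepFun_iff_Indep]
    refine indep_of_indep_of_le_left (indep_of_indep_of_le_right (h.indep s t hs hst) ?_) ?_
    · exact le_iSup₂_of_le s ⟨hs, le_rfl⟩ (le_iSup_of_le y le_rfl)
    · exact le_iSup_of_le x le_rfl
  have hD : (fun ω => X t x ω - X s x ω) ∈ SX X := Submodule.sub_mem _ (mem_SX X t x) (mem_SX X s x)
  have h1 : ∫ ω, (X t x ω - X s x ω) * X s y ω ∂P = 0 := by
    have := hI.integral_fun_mul_eq_mul_integral (h.exv hD).1.aestronglyMeasurable (h.meas s y).aestronglyMeasurable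
    rw [this, h.mean hD, zero_mul]
  have h2 : ∫ ω, X t x ω * X s y ω ∂P =
      ∫ ω, ((X t x ω - X s x ω) * X s y ω + X s x ω * X s y ω) ∂P := by
    congr 1; funext ω; ring
  rw [h2, integral_add (h.integ hD (mem_SX X s y)) (h.integ (mem_SX X s x) (mem_SX X s y)), h1,
    zero_add, h.cov s hs]
  rfl

lemma Fld.q_self (h : Fld P k X) {t : ℝ} (ht : 0 ≤ t) : qq k t 0 = t := by
  unfold qq
  have he : (1:ℝ) ≤ Real.exp t := Real.one_le_exp ht
  simp only [smul_zero, h.k0]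
  rw [integral_Icc_eq_integral_Ioc, ← intervalIntegral.integral_of_le he, integral_one_div_of_pos (by norm_num) (Real.exp_pos t)]
  simp

lemma Fld.q_integ (h : Fld P k X) (t : ℝ) (z : EE d) :
    IntegrableOn (fun u : ℝ => k (u • z) / u) (Set.Icc (1:ℝ) (Real.exp t)) := by
  apply ContinuousOn.integrableOn_compact isCompact_Icc
  have := h.k1.continuous
  apply ContinuousOn.div
  · fun_prop
  · fun_prop
  · intro u hu; have := hu.1; positivity

lemma Fld.q_le (h : Fld P k X) {t : ℝ} (ht : 0 ≤ t) (z : EE d) : qq k t z ≤ t := by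
  conv_rhs => rw [← h.q_self ht]
  unfold qq
  apply setIntegral_mono_on (h.q_integ t z) (h.q_integ t 0) measurableSet_Icc
  intro u hu
  have hu0 : 0 < u := by linarith [hu.1]
  rw [smul_zero, h.k0]
  apply div_le_div_of_nonneg_right _ hu0.le
  exact (le_abs_self _).trans (h.kb _)

lemma Fld.q_ge (h : Fld P k X) {L : ℝ≥0} (hL : LipschitzWith L k) {t : ℝ} (ht : 0 ≤ t) {z : EE d}
    (hz : ‖z‖ ≤ Real.exp (-t)) : t - qq k t z ≤ L := by
  have he : (1:ℝ) ≤ Real.exp t := Real.one_le_exp ht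
  conv_lhs => rw [← h.q_self ht]
  have h1 : qq k (qq k t 0) z = qq k t z := by rw [h.q_self ht]
  rw [h1]
  unfold qq
  rw [← integral_sub (h.q_integ t 0) (h.q_integ t z)]
  calc ∫ u in Set.Icc (1:ℝ) (Real.exp t), (k (u • (0 : EE d)) / u - k (u • z) / u)
      ≤ ∫ u in Set.Icc (1:ℝ) (Real.exp t), (L * ‖z‖ : ℝ) := by
        apply setIntegral_mono_on ((h.q_integ t 0).sub (h.q_integ t z)) (integrableOn_const (by simp)) measurableSet_Icc
        intro u hu
        have hu0 : 0 < u := by linarith [hu.1]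
        show k (u • (0 : EE d)) / u - k (u • z) / u ≤ _
        rw [← sub_div, div_le_iff₀ hu0]
        have := hL.dist_le_mul (u • 0) (u • z)
        rw [Real.dist_eq, smul_zero, dist_zero_left, norm_smul, Real.norm_of_nonneg hu0.le] at this
        rw [smul_zero]
        calc k 0 - k (u • z) ≤ |k 0 - k (u • z)| := le_abs_self _
          _ ≤ _ := this
          _ = _ := by ring
    _ = (Real.exp t - 1) * (L * ‖z‖) := by
        rw [setIntegral_const, Measure.real, Real.volume_Icc, ENNReal.toReal_ofReal (by linarith)]
        rfl
    _ ≤ (Real.exp t) * (L * Real.exp (-t)) := by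
        gcongr
        linarith
    _ = L := by
        rw [mul_left_comm, ← Real.exp_add]; simp

lemma Fld.q_const (h : Fld P k X) {R : ℝ} (hR : ∀ z, R ≤ ‖z‖ → k z = 0) (n : ℕ) {z : EE d}
    (hz : R * Real.exp (-(n:ℝ)) ≤ ‖z‖) : qq k ((n + 1 : ℕ) : ℝ) z = qq k n z := by
  unfold qq
  apply setIntegral_eq_of_subset_of_forall_diff_eq_zero measurableSet_Icc
  · apply Set.Icc_subset_Icc le_rfl
    apply Real.exp_le_exp.2; push_cast; linarith
  · rintro u ⟨hu1, hu2⟩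
    have hu : Real.exp (n:ℝ) ≤ u := by
      by_contra hlt
      push Not at hlt
      exact hu2 ⟨hu1.1, hlt.le⟩
    have hu0 : 0 < u := by linarith [hu1.1]
    rw [hR, zero_div]
    rw [norm_smul, Real.norm_of_nonneg hu0.le]
    calc R = Real.exp (n:ℝ) * (R * Real.exp (-(n:ℝ))) := by
          rw [mul_left_comm, ← Real.exp_add]; simp
      _ ≤ Real.exp (n:ℝ) * ‖z‖ := by gcongr
      _ ≤ u * ‖z‖ := by gcongr

lemma Fld.same (h : Fld P k X) (n : ℕ) (x y : EE d) :
    ∫ ω, X n x ω * X n y ω ∂P = qq k n (x - y) := h.cov n (Nat.cast_nonneg n) x y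

lemma Fld.var (h : Fld P k X) (n : ℕ) (x : EE d) : ∫ ω, X n x ω * X n x ω ∂P = n := by
  rw [h.same, sub_self, h.q_self (Nat.cast_nonneg n)]

lemma Fld.incr_cov (h : Fld P k X) (n : ℕ) (x y : EE d) :
    ∫ ω, (X ((n + 1 : ℕ) : ℝ) x ω - X n x ω) * (X ((n + 1 : ℕ) : ℝ) y ω - X n y ω) ∂P
      = qq k ((n + 1 : ℕ) : ℝ) (x - y) - qq k n (x - y) := by
  have hlt : (n : ℝ) < ((n + 1 : ℕ) : ℝ) := by push_cast; linarith
  have hn : (0:ℝ) ≤ n := Nat.cast_nonneg n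
  have c1 := h.cross hn hlt x y
  have c2 := h.cross hn hlt y x
  have c3 := h.same n x y
  have c4 := h.same (n + 1) x y
  have c5 := h.same n y x
  have c6 : ∫ ω, X n y ω * X n x ω ∂P = qq k n (x - y) := by
    rw [← c3]; congr 1; funext ω; ring
  set T : ℝ := ((n + 1 : ℕ) : ℝ)
  have i1 := h.integ (mem_SX X T x) (mem_SX X T y)
  have i2 := h.integ (mem_SX X T x) (mem_SX X n y)
  have i3 := h.integ (mem_SX X T y) (mem_SX X n x)
  have i4 := h.integ (mem_SX X n x) (mem_SX X n y)
  have he : (fun ω => (X T x ω - X n x ω) * (X T y ω - X n y ω)) =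
      fun ω => (X T x ω * X T y ω - X T x ω * X n y ω) - (X T y ω * X n x ω - X n x ω * X n y ω) := by
    funext ω; ring
  have i12 : Integrable (fun ω => X T x ω * X T y ω - X T x ω * X n y ω) P := i1.sub i2
  have i34 : Integrable (fun ω => X T y ω * X n x ω - X n x ω * X n y ω) P := i3.sub i4
  rw [he, integral_sub i12 i34, integral_sub i1 i2, integral_sub i3 i4, c1, c2, c3, c4,
    ← c5, c6]
  ring

/-- The a.s. everywhere-continuous modification at integer times. -/
def YY (N : Set Ω) (X : ℝ → EE d → Ω → ℝ) (n : ℕ) (x : EE d) (ω : Ω) : ℝ :=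
  open Classical in if ω ∈ N then 0 else X n x ω

lemma YY_ae {N : Set Ω} (hN0 : P N = 0) (X : ℝ → EE d → Ω → ℝ) :
    ∀ᵐ ω ∂P, ∀ n x, YY N X n x ω = X n x ω := by
  have : ∀ᵐ ω ∂P, ω ∉ N := measure_eq_zero_iff_ae_notMem.1 hN0
  filter_upwards [this] with ω hω n x
  simp [YY, hω]

lemma Fld.toDF (h : Fld P k X) {N : Set Ω} (hN : MeasurableSet N) (hN0 : P N = 0)
    (hNc : ∀ ω, ω ∉ N → Continuous fun p : ℝ × EE d => X p.1 p.2 ω)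
    {R : ℝ} (hR : ∀ z, R ≤ ‖z‖ → k z = 0) {L : ℝ≥0} (hL : LipschitzWith L k) :
    DF P (YY N X) R L where
  meas n x := by
    unfold YY
    exact Measurable.ite hN measurable_const (h.meas _ _)
  cont n ω := by
    unfold YY
    by_cases hω : ω ∈ N
    · simp only [hω, if_true]; exact continuous_const
    · simp only [hω, if_false]
      exact (hNc ω hω).comp (by fun_prop : Continuous (fun x : EE d => ((n : ℝ), x)))
  zero x := by
    have h1 := h.law (mem_SX X ((0:ℕ):ℝ) x) (v := 0) (by rw [h.var]; simp)
    rw [gaussianReal_zero_var] at h1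
    have h2 : ∀ᵐ y ∂(P.map (X ((0:ℕ):ℝ) x)), y = 0 := by rw [h1]; simp [ae_dirac_eq]
    have h3 := ae_of_ae_map (h.meas _ _).aemeasurable h2
    filter_upwards [YY_ae hN0 X, h3] with ω h4 h5
    rw [h4, h5]; rfl
  law n x := by
    rw [Measure.map_congr (g := X n x) (by filter_upwards [YY_ae hN0 X] with ω h4; exact h4 n x)]
    exact h.law (mem_SX X n x) (by rw [h.var]; simp)
  incr n x := by
    rw [Measure.map_congr (g := fun ω => X ((n + 1 : ℕ) : ℝ) x ω - X n x ω)
      (by filter_upwards [YY_ae hN0 X] with ω h4; rw [h4, h4])]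
    refine h.law (Submodule.sub_mem _ (mem_SX X _ x) (mem_SX X n x)) ?_
    refine (h.incr_cov n x x).trans ?_
    rw [sub_self, h.q_self (Nat.cast_nonneg _), h.q_self (Nat.cast_nonneg _)]
    simp
  indep n x y := by
    have hI : IndepFun (fun ω => (X ((n + 1 : ℕ) : ℝ) x ω - X n x ω, X ((n + 1 : ℕ) : ℝ) y ω - X n y ω))
        (fun ω => (trP n (pth (fun j => X (j : ℝ) x) ω), trP n (pth (fun j => X (j : ℝ) y) ω))) P := by
      rw [IndepFun_iff_Indep]
      refine indep_of_indep_of_le_left (indep_of_indep_of_le_right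
        (h.indep n ((n + 1 : ℕ) : ℝ) (Nat.cast_nonneg _) (by push_cast; linarith)) ?_) ?_
      · rw [← measurable_iff_comap_le]
        have hz : ∀ z : EE d, Measurable[⨆ u ∈ Set.Icc (0:ℝ) n, ⨆ x : EE d, MeasurableSpace.comap (X u x) inferInstance]
            (fun ω => trP n (pth (fun j => X (j : ℝ) z) ω)) := by
          intro z
          apply @measurable_pi_lambda _ _ _ (_) _ _
          intro j
          rw [measurable_iff_comap_le]
          refine le_iSup₂_of_le ((min j n : ℕ) : ℝ) ⟨Nat.cast_nonneg _, Nat.cast_le.2 (min_le_right _ _)⟩ (le_iSup_of_le z le_rfl)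
        exact @Measurable.prodMk _ _ _ _ _ (_) _ _ (hz x) (hz y)
      · rw [← measurable_iff_comap_le]
        have hz : ∀ z : EE d, Measurable[⨆ x : EE d, MeasurableSpace.comap (fun ω => X ((n + 1 : ℕ) : ℝ) x ω - X n x ω) inferInstance]
            (fun ω => X ((n + 1 : ℕ) : ℝ) z ω - X n z ω) := by
          intro z
          rw [measurable_iff_comap_le]
          exact le_iSup_of_le z le_rfl
        exact @Measurable.prodMk _ _ _ _ _ (_) _ _ (hz x) (hz y)
    refine hI.congr ?_ ?_
    · filter_upwards [YY_ae hN0 X] with ω h4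
      simp only [h4]
    · filter_upwards [YY_ae hN0 X] with ω h4
      have e : ∀ z, pth (fun j => X (j : ℝ) z) ω = pth (fun j => YY N X j z) ω :=
        fun z => funext fun j => (h4 j z).symm
      rw [e x, e y]
  dec n x y hxy := by
    have hI : IndepFun (fun ω => X ((n + 1 : ℕ) : ℝ) x ω - X n x ω) (fun ω => X ((n + 1 : ℕ) : ℝ) y ω - X n y ω) P := by
      refine h.indepFun (Submodule.sub_mem _ (mem_SX X _ x) (mem_SX X n x))
        (Submodule.sub_mem _ (mem_SX X _ y) (mem_SX X n y)) ?_
      rw [h.incr_cov, h.q_const hR n hxy, sub_self]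
    refine hI.congr ?_ ?_
    · filter_upwards [YY_ae hN0 X] with ω h4
      simp only [h4]
    · filter_upwards [YY_ae hN0 X] with ω h4
      simp only [h4]
  loc n x y hn hxy := by
    have hn0 : (0:ℝ) < n := by exact_mod_cast hn
    set δ : ℝ := n - qq k n (x - y) with hδ
    have hδ0 : 0 ≤ δ := sub_nonneg.2 (h.q_le hn0.le _)
    have hδL : δ ≤ L := h.q_ge hL hn0.le hxy
    set a : ℝ := δ / n with ha
    have han : a * n = δ := by rw [ha]; field_simp
    have ha0 : 0 ≤ a := by positivity
    have mx := mem_SX X (n:ℝ) x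
    have my := mem_SX X (n:ℝ) y
    have mE : (fun ω => X n x ω - X n y ω - a * X n x ω) ∈ SX X :=
      Submodule.sub_mem _ (Submodule.sub_mem _ mx my) (Submodule.smul_mem _ a mx)
    have ixx := h.integ mx mx
    have ixy := h.integ mx my
    have iyy := h.integ my my
    have hEX : ∫ ω, (X n x ω - X n y ω - a * X n x ω) * X n x ω ∂P = 0 := by
      have he : (fun ω => (X n x ω - X n y ω - a * X n x ω) * X n x ω) =
          fun ω => (1 - a) * (X n x ω * X n x ω) - X n x ω * X n y ω := by funext ω; ring
      rw [he, integral_sub (ixx.const_mul _) ixy, integral_const_mul, h.var, h.same]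
      rw [hδ] at han; linarith
    have hEE : ∫ ω, (X n x ω - X n y ω - a * X n x ω) * (X n x ω - X n y ω - a * X n x ω) ∂P = 2 * δ - a * δ := by
      have he : (fun ω => (X n x ω - X n y ω - a * X n x ω) * (X n x ω - X n y ω - a * X n x ω)) =
          fun ω => ((1 - a) ^ 2 * (X n x ω * X n x ω) - 2 * (1 - a) * (X n x ω * X n y ω)) + X n y ω * X n y ω := by
        funext ω; ring
      have i12 : Integrable (fun ω => (1 - a) ^ 2 * (X n x ω * X n x ω) - 2 * (1 - a) * (X n x ω * X n y ω)) P :=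
        (ixx.const_mul _).sub (ixy.const_mul _)
      rw [he, integral_add i12 iyy,
        integral_sub (ixx.const_mul _) (ixy.const_mul _), integral_const_mul, integral_const_mul, h.var, h.var, h.same]
      have : qq k n (x - y) = n - δ := by rw [hδ]; ring
      rw [this]
      linear_combination (a - 2) * han + 2 * han - han * 0
    have hnn : 0 ≤ 2 * δ - a * δ := by
      rw [← hEE]; exact integral_nonneg fun ω => mul_self_nonneg _
    refine ⟨a, ⟨2 * δ - a * δ, hnn⟩, ha0, by rw [han]; exact hδL, ?_, ?_, ?_⟩
    · have : 0 ≤ a * δ := by positivity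
      show 2 * δ - a * δ ≤ 2 * (L : ℝ)
      linarith
    · rw [Measure.map_congr (g := fun ω => X n x ω - X n y ω - a * X n x ω)
        (by filter_upwards [YY_ae hN0 X] with ω h4; rw [h4, h4])]
      exact h.law mE hEE
    · refine (h.indepFun mE mx hEX).congr ?_ ?_
      · filter_upwards [YY_ae hN0 X] with ω h4
        simp only [h4]
      · filter_upwards [YY_ae hN0 X] with ω h4
        simp only [h4]

end

end

end

theorem derivative_measure_infinite_first_moment
    {d : ℕ} (hd : 1 ≤ d)
    {Ω : Type*} [m0 : MeasurableSpace Ω] (P : Measure Ω) [IsProbabilityMeasure P]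
    (k : EuclideanSpace ℝ (Fin d) → ℝ)
    (hk1 : ContDiff ℝ 1 k) (hk0 : k 0 = 1) (hkb : ∀ z, |k z| ≤ 1)
    (hksupp : HasCompactSupport k)
    (hkpd : ∀ (n : ℕ) (z : Fin n → EuclideanSpace ℝ (Fin d)) (c : Fin n → ℝ),
      0 ≤ ∑ i, ∑ j, c i * c j * k (z i - z j))
    (X : ℝ → EuclideanSpace ℝ (Fin d) → Ω → ℝ)
    (hXmeas : ∀ t x, Measurable (X t x))
    (hXgauss : ∀ (n : ℕ) (c : Fin n → ℝ) (t : Fin n → ℝ)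
        (x : Fin n → EuclideanSpace ℝ (Fin d)),
      ∃ v : NNReal,
        Measure.map (fun ω => ∑ i, c i * X (t i) (x i) ω) P = gaussianReal 0 v)
    (hXcent : ∀ t x, ∫ ω, X t x ω ∂P = 0)
    (hXcov : ∀ t, 0 ≤ t → ∀ x y : EuclideanSpace ℝ (Fin d),
      ∫ ω, X t x ω * X t y ω ∂P = ∫ u in Set.Icc (1:ℝ) (Real.exp t), k (u • (x - y)) / u)
    (hXcont : ∀ᵐ ω ∂P, Continuous fun p : ℝ × EuclideanSpace ℝ (Fin d) => X p.1 p.2 ω)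
    (hXindep : ∀ s t : ℝ, 0 ≤ s → s < t →
      Indep (⨆ x : EuclideanSpace ℝ (Fin d),
          MeasurableSpace.comap (fun ω => X t x ω - X s x ω) inferInstance)
        (⨆ u ∈ Set.Icc (0:ℝ) s, ⨆ x : EuclideanSpace ℝ (Fin d),
          MeasurableSpace.comap (X u x) inferInstance) P)
    :
    ∀ A : Set (EuclideanSpace ℝ (Fin d)), A.Nonempty → IsOpen A → Bornology.IsBounded A →
    ∀ M' : Ω → ℝ,
      (∀ᵐ ω ∂P, Tendsto (fun t : ℝ =>
          ∫ x in A, (Real.sqrt (2 * (d:ℝ)) * t - X t x ω) *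
            Real.exp (Real.sqrt (2 * (d:ℝ)) * X t x ω - (d:ℝ) * t))
        atTop (nhds (M' ω))) →
      ∫⁻ ω, ENNReal.ofReal (M' ω) ∂P = ⊤ := by
  intro A hne hAo hb M' hM
  have hF : Fld P k X := ⟨hk1, hk0, hkb, hksupp, hXmeas, hXgauss, hXcov, hXcont, hXindep⟩
  -- a measurable null set containing the discontinuity set
  set N : Set Ω := toMeasurable P {ω | ¬ Continuous fun p : ℝ × EE d => X p.1 p.2 ω} with hN
  have hNm : MeasurableSet N := measurableSet_toMeasurable _ _
  have hN0 : P N = 0 := by rw [hN, measure_toMeasurable]; exact hXcont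
  have hNc : ∀ ω, ω ∉ N → Continuous fun p : ℝ × EE d => X p.1 p.2 ω := by
    intro ω hω
    by_contra hc
    exact hω (subset_toMeasurable _ _ hc)
  -- the range parameter
  obtain ⟨R1, hR1⟩ := (hksupp.isCompact.isBounded).subset_closedBall (0 : EE d)
  set R : ℝ := max (max (R1 + 1) (Metric.diam A)) 1 with hR
  have hR0 : 0 < R := lt_of_lt_of_le one_pos (le_max_right _ _)
  have hRk : ∀ z, R ≤ ‖z‖ → k z = 0 := by
    intro z hz
    apply image_eq_zero_of_notMem_tsupport
    intro hmem
    have h1 := hR1 hmem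
    rw [Metric.mem_closedBall, dist_zero_right] at h1
    have h2 : R1 + 1 ≤ R := (le_max_left _ _).trans (le_max_left _ _)
    linarith
  have hAR : ∀ x ∈ A, ∀ y ∈ A, ‖x - y‖ ≤ R := by
    intro x hx y hy
    rw [← dist_eq_norm]
    exact (Metric.dist_le_diam_of_mem hb hx hy).trans ((le_max_right _ _).trans (le_max_left _ _))
  obtain ⟨L, hL⟩ := ContDiff.lipschitzWith_of_hasCompactSupport hksupp hk1 (by simp)
  have hDF := hF.toDF hNm hN0 hNc hRk hL
  have hd1 : (1:ℝ) ≤ d := by exact_mod_cast hd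
  have hcd : Real.sqrt (2 * (d:ℝ)) ^ 2 = 2 * d := Real.sq_sqrt (by positivity)
  have hc : 7 / 5 ≤ Real.sqrt (2 * (d:ℝ)) := by
    apply Real.le_sqrt_of_sq_le
    norm_num
    linarith
  refine hDF.concl hR0 L.2 hc hcd hne hAo hb hAR ?_
  filter_upwards [hM, YY_ae hN0 X] with ω h1 h2
  have h3 := h1.comp (tendsto_natCast_atTop_atTop (R := ℝ))
  refine h3.congr fun n => ?_
  unfold Mn
  simp only [Function.comp_apply, h2]
  rw [hcd]
  have : (2 * (d:ℝ)) / 2 = d := by ring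
  rw [this]
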